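/- arXiv:1804.03514 — 3 statements merged into one kernel-verified Lean document; each statement's English description precedes it below -/
import Mathlib

section
/- Let q ≥ 3 and d ≥ 2, and set β_* = max{1 − q/(d+1), 0}. Suppose that for every α > 1, for all colours c₁, c₂ ∈ [q] and for all p^{(1)},…,p^{(d)} ∈ Ex_{c₂}(α), it holds that h_{c₁,c₂,β_*}(p^{(1)},…,p^{(d)}) < α^{1/d}. Then for every β ∈ (0,1) with β ≥ β_*, the q-state Potts model with parameter β has uniqueness on the infinite d-ary tree: for every colour c ∈ [q], limsup_{n→∞} max_{τ:Λ_{d,n}→[q]} |Pr_{𝕋_{d,n}}[σ(v_{d,n}) = c ∣ σ(Λ_{d,n}) = τ] − 1/q| = 0. -/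
open Filter

/-- Weight of a configuration of the `q`-state Potts model with parameter `β`
on the `d`-ary tree of height `n`.  A vertex of the tree is a pair of a depth
`k ≤ n` and a path of length `k`; the parent of a vertex of depth `k+1` is
obtained by dropping the last step of its path.  The weight is
`β ^ (number of monochromatic edges)`. -/
noncomputable def treeWeight (q d n : ℕ) (β : ℝ)
    (σ : (Σ k : Fin (n + 1), (Fin k → Fin d)) → Fin q) : ℝ :=
  β ^ (Finset.univ.filter (fun p : Σ k : Fin n, (Fin (k + 1) → Fin d) =>
        σ ⟨p.1.succ, p.2⟩ = σ ⟨p.1.castSucc, fun i => p.2 i.castSucc⟩)).card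

/-- The conditional probability, under the Gibbs distribution of the `q`-state
Potts model with parameter `β` on the `d`-ary tree `𝕋_{d,n}` of height `n`,
that the root receives colour `c` given that the leaves (the depth-`n`
vertices) are coloured according to `τ`. -/
noncomputable def condRootProb (q d n : ℕ) (β : ℝ)
    (τ : (Fin n → Fin d) → Fin q) (c : Fin q) : ℝ :=
  (∑ σ ∈ Finset.univ.filter
      (fun σ : (Σ k : Fin (n + 1), (Fin k → Fin d)) → Fin q =>
        σ ⟨⟨0, n.succ_pos⟩, Fin.elim0⟩ = c ∧
          ∀ f : Fin n → Fin d, σ ⟨⟨n, n.lt_succ_self⟩, f⟩ = τ f),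
      treeWeight q d n β σ) /
  (∑ σ ∈ Finset.univ.filter
      (fun σ : (Σ k : Fin (n + 1), (Fin k → Fin d)) → Fin q =>
        ∀ f : Fin n → Fin d, σ ⟨⟨n, n.lt_succ_self⟩, f⟩ = τ f),
      treeWeight q d n β σ)

/-- `γ(q,β,d,n)`: the maximum, over boundary configurations `τ` and colours
`c₁, c₂`, of the ratio of conditional root marginals. -/
noncomputable def pottsGamma (q d : ℕ) (β : ℝ) (n : ℕ) : ℝ :=
  ⨆ τ : (Fin n → Fin d) → Fin q, ⨆ c₁ : Fin q, ⨆ c₂ : Fin q,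
    condRootProb q d n β τ c₁ / condRootProb q d n β τ c₂

/-- The function `g_{c₁,c₂,β}` of the two-step recursion. -/
noncomputable def gfun (q d : ℕ) (β : ℝ) (c₁ c₂ : Fin q) (p : Fin d → Fin q → ℝ) : ℝ :=
  ∏ k : Fin d,
    (1 - ((1 - β) * (p k c₁ - p k c₂)) /
      (β * p k c₂ + ∑ c ∈ Finset.univ.erase c₂, p k c))

/-- The function `h_{c₁,c₂,β}` of the two-step recursion. -/
noncomputable def hfun (q d : ℕ) (β : ℝ) (c₁ c₂ : Fin q) (p : Fin d → Fin q → ℝ) : ℝ :=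
  1 + ((1 - β) * (1 - gfun q d β c₁ c₂ p)) /
    (β + ∑ c ∈ Finset.univ.erase c₂, gfun q d β c c₂ p)

/-- `Δ_α`: probability vectors on `q` colours whose entries are within a
factor `α` of each other. -/
def simplexAlpha (q : ℕ) (α : ℝ) : Set (Fin q → ℝ) :=
  {p | (∀ i, 0 ≤ p i) ∧ (∑ i, p i) = 1 ∧ ∀ i j, p i ≤ α * p j}

/-- `M_{α,c₁,c₂,β}`: the maximum of `h_{c₁,c₂,β}` over `Δ_α^d`. -/
noncomputable def Mval (q d : ℕ) (α β : ℝ) (c₁ c₂ : Fin q) : ℝ :=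
  sSup ((hfun q d β c₁ c₂) '' {p | ∀ k, p k ∈ simplexAlpha q α})

/-- `Ex_c(α)`: vectors with entries in `{1, α}`, whose `c`-entry is `1`
and with at least one entry equal to `α`. -/
def exSet (q : ℕ) (c : Fin q) (α : ℝ) : Set (Fin q → ℝ) :=
  {p | (∀ c', p c' = 1 ∨ p c' = α) ∧ p c = 1 ∧ ∃ c', p c' = α}

/-- The function `f_u(d,β,x,y)` from the one-step analysis. -/
noncomputable def fU (d : ℕ) (β x y : ℝ) : ℝ :=
  (1 - (1 - β) * y) ^ d /
    ((1 - (1 - β) * y) ^ d +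
      2 * (1 - (1 - β) * x) ^ ((d : ℝ) / 2) *
        (1 - (1 - β) * (1 - x - y)) ^ ((d : ℝ) / 2))

/-- The function `f_ℓ(d,β,x,y)` from the one-step analysis. -/
noncomputable def fL (d : ℕ) (β x y : ℝ) : ℝ :=
  (1 - (1 - β) * x) ^ d /
    ((1 - (1 - β) * x) ^ d + (1 - (1 - β) * y) ^ d +
      (1 - (1 - β) * (1 - x - y)) ^ d)

/-- The pair of sequences `(u_n(d,β), ℓ_n(d,β))`, defined by
`u_0 = 1`, `ℓ_0 = 0`, `u_{n+1} = f_u(d,β,u_n,ℓ_n)`, `ℓ_{n+1} = f_ℓ(d,β,u_n,ℓ_n)`. -/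
noncomputable def ulSeq (d : ℕ) (β : ℝ) : ℕ → ℝ × ℝ
  | 0 => (1, 0)
  | n + 1 =>
      (fU d β (ulSeq d β n).1 (ulSeq d β n).2,
       fL d β (ulSeq d β n).1 (ulSeq d β n).2)

/-- The unnormalised message map of the Potts model. -/
noncomputable def pottsMap (q : ℕ) (β : ℝ) : (Fin q → ℝ) →ₗ[ℝ] (Fin q → ℝ) where
  toFun x c := ∑ c', x c' - (1 - β) * x c
  map_add' x y := by
    ext c
    simp only [Pi.add_apply, Finset.sum_add_distrib]
    ring
  map_smul' r x := by
    ext c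
    simp only [Pi.smul_apply, smul_eq_mul, ← Finset.mul_sum, RingHom.id_apply]
    ring

theorem pottsMap_apply (q : ℕ) (β : ℝ) (x : Fin q → ℝ) (c : Fin q) :
    pottsMap q β x c = ∑ c', x c' - (1 - β) * x c := rfl

theorem pottsMap_eq_erase (q : ℕ) (β : ℝ) (x : Fin q → ℝ) (c : Fin q) :
    pottsMap q β x c = β * x c + ∑ c' ∈ Finset.univ.erase c, x c' := by
  rw [pottsMap_apply, ← Finset.add_sum_erase _ _ (Finset.mem_univ c)]
  ring

theorem univ_erase_nonempty {q : ℕ} (hq : 2 ≤ q) (c : Fin q) :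
    (Finset.univ.erase c).Nonempty := by
  rw [← Finset.card_pos, Finset.card_erase_of_mem (Finset.mem_univ c)]
  simp only [Finset.card_univ, Fintype.card_fin]
  omega

theorem pottsMap_pos {q : ℕ} (hq : 2 ≤ q) {β : ℝ} (hβ : 0 ≤ β) {x : Fin q → ℝ}
    (hx : ∀ c, 0 < x c) (c : Fin q) : 0 < pottsMap q β x c := by
  rw [pottsMap_eq_erase]
  have this := univ_erase_nonempty hq c
  have h1 := Finset.sum_pos (fun c' _ => hx c') this
  have h2 := mul_nonneg hβ (hx c).le
  linarith

/-- The two-step recursion before normalisation: the vector of products of messages. -/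
noncomputable def pottsProd (q d : ℕ) (β : ℝ) (p : Fin d → Fin q → ℝ) (c : Fin q) : ℝ :=
  ∏ k, pottsMap q β (p k) c

theorem gfun_eq_div {q d : ℕ} {β : ℝ} (c₁ c₂ : Fin q) {p : Fin d → Fin q → ℝ}
    (hp : ∀ k, 0 < pottsMap q β (p k) c₂) :
    gfun q d β c₁ c₂ p = pottsProd q d β p c₁ / pottsProd q d β p c₂ := by
  rw [gfun, pottsProd, pottsProd, ← Finset.prod_div_distrib]
  refine Finset.prod_congr rfl fun k _ => ?_
  rw [← pottsMap_eq_erase, eq_div_iff (hp k).ne', sub_mul, div_mul_cancel₀ _ (hp k).ne',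
    pottsMap_apply, pottsMap_apply]
  ring

theorem pottsProd_pos {q d : ℕ} (hq : 2 ≤ q) {β : ℝ} (hβ : 0 ≤ β) {p : Fin d → Fin q → ℝ}
    (hp : ∀ k c, 0 < p k c) (c : Fin q) : 0 < pottsProd q d β p c :=
  Finset.prod_pos fun k _ => pottsMap_pos hq hβ (hp k) c

theorem hfun_eq_div {q d : ℕ} (hq : 2 ≤ q) {β : ℝ} (hβ : 0 ≤ β) (c₁ c₂ : Fin q)
    {p : Fin d → Fin q → ℝ} (hp : ∀ k c, 0 < p k c) :
    hfun q d β c₁ c₂ p = pottsMap q β (pottsProd q d β p) c₁ /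
      pottsMap q β (pottsProd q d β p) c₂ := by
  have hR := pottsProd_pos hq hβ hp
  have hT := pottsMap_pos hq hβ hR c₂
  have hg : ∀ c, gfun q d β c c₂ p = pottsProd q d β p c / pottsProd q d β p c₂ := fun c =>
    gfun_eq_div c c₂ fun k => pottsMap_pos hq hβ (hp k) c₂
  have hden : β + ∑ c ∈ Finset.univ.erase c₂, gfun q d β c c₂ p =
      pottsMap q β (pottsProd q d β p) c₂ / pottsProd q d β p c₂ := by
    simp_rw [hg]
    rw [pottsMap_eq_erase, ← Finset.sum_div, add_div, mul_div_cancel_right₀ _ (hR c₂).ne']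
  rw [hfun, hden, hg, eq_div_iff hT.ne', add_mul, one_mul]
  have := (hR c₂).ne'
  have := hT.ne'
  field_simp
  rw [pottsMap_apply, pottsMap_apply]
  ring

theorem one_le_of_mem_exSet {q : ℕ} {c : Fin q} {α : ℝ} (hα : 1 < α) {p : Fin q → ℝ}
    (hp : p ∈ exSet q c α) (i : Fin q) : 1 ≤ p i := by
  rcases hp.1 i with h | h <;> rw [h]
  exact hα.le

theorem gfun_bounds_of_mem_exSet {q d : ℕ} (hq : 2 ≤ q) {α β β' : ℝ} (hα : 1 < α) (hβ : 0 ≤ β)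
    (hββ' : β ≤ β') (hβ' : β' ≤ 1) (c c₂ : Fin q) {p : Fin d → Fin q → ℝ}
    (hp : ∀ k, p k ∈ exSet q c₂ α) :
    0 < gfun q d β c c₂ p ∧ gfun q d β c c₂ p ≤ gfun q d β' c c₂ p ∧
      gfun q d β' c c₂ p ≤ 1 := by
  have hp1 : ∀ k i, 1 ≤ p k i := fun k => one_le_of_mem_exSet hα (hp k)
  have hp0 : ∀ k i, 0 < p k i := fun k i => by linarith [hp1 k i]
  have hpos : ∀ k c', 0 < pottsMap q β (p k) c' := fun k => pottsMap_pos hq hβ (hp0 k)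
  have hpos' : ∀ k c', 0 < pottsMap q β' (p k) c' := fun k =>
    pottsMap_pos hq (hβ.trans hββ') (hp0 k)
  refine ⟨?_, ?_, ?_⟩
  · rw [gfun_eq_div c c₂ fun k => hpos k c₂]
    exact div_pos (pottsProd_pos hq hβ hp0 c) (pottsProd_pos hq hβ hp0 c₂)
  · simp only [gfun_eq_div c c₂ fun k => hpos k c₂, gfun_eq_div c c₂ fun k => hpos' k c₂]
    simp only [pottsProd, ← Finset.prod_div_distrib]
    refine Finset.prod_le_prod (fun k _ => (div_pos (hpos k c) (hpos k c₂)).le) fun k _ => ?_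
    rw [div_le_div_iff₀ (hpos k c₂) (hpos' k c₂)]
    simp only [pottsMap_apply]
    have hS : 0 ≤ ∑ c', p k c' := Finset.sum_nonneg fun c' _ => (hp0 k c').le
    have h2 : p k c₂ ≤ p k c := by rw [(hp k).2.1]; exact hp1 k c
    nlinarith [mul_nonneg (mul_nonneg hS (sub_nonneg.2 h2)) (sub_nonneg.2 hββ')]
  · rw [gfun_eq_div c c₂ fun k => hpos' k c₂]
    simp only [pottsProd, ← Finset.prod_div_distrib]
    refine Finset.prod_le_one (fun k _ => (div_pos (hpos' k c) (hpos' k c₂)).le) fun k _ => ?_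
    rw [div_le_one (hpos' k c₂)]
    simp only [pottsMap_apply]
    have h2 : p k c₂ ≤ p k c := by rw [(hp k).2.1]; exact hp1 k c
    nlinarith

theorem hfun_antitone_of_mem_exSet {q d : ℕ} (hq : 2 ≤ q) {α β β' : ℝ} (hα : 1 < α)
    (hβ : 0 ≤ β) (hββ' : β ≤ β') (hβ' : β' ≤ 1) (c₁ c₂ : Fin q) {p : Fin d → Fin q → ℝ}
    (hp : ∀ k, p k ∈ exSet q c₂ α) :
    hfun q d β' c₁ c₂ p ≤ hfun q d β c₁ c₂ p := by
  have hg := fun c => gfun_bounds_of_mem_exSet hq hα hβ hββ' hβ' c c₂ hp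
  have hne := univ_erase_nonempty hq c₂
  have hs := Finset.sum_pos (fun c (_ : c ∈ Finset.univ.erase c₂) => (hg c).1) hne
  have hs' := Finset.sum_le_sum (fun c (_ : c ∈ Finset.univ.erase c₂) => (hg c).2.1)
  obtain ⟨h1, h2, h3⟩ := hg c₁
  rw [hfun, hfun]
  refine add_le_add_right (div_le_div₀ ?_ ?_ ?_ ?_) 1
  · exact mul_nonneg (by linarith) (by linarith)
  · exact mul_le_mul (by linarith) (by linarith) (by linarith) (by linarith)
  · linarith
  · linarith

/-- The defect `K * T(R)_{c₂} - T(R)_{c₁}` as a linear functional of `R`. -/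
noncomputable def pottsDefect (q : ℕ) (β K : ℝ) (c₁ c₂ : Fin q) : (Fin q → ℝ) →ₗ[ℝ] ℝ :=
  K • (LinearMap.proj c₂ ∘ₗ pottsMap q β) - LinearMap.proj c₁ ∘ₗ pottsMap q β

theorem pottsDefect_apply (q : ℕ) (β K : ℝ) (c₁ c₂ : Fin q) (R : Fin q → ℝ) :
    pottsDefect q β K c₁ c₂ R = K * pottsMap q β R c₂ - pottsMap q β R c₁ := rfl

theorem pottsDefect_mono {q : ℕ} {β K : ℝ} (hβ : β ≤ 1) (hK : 1 ≤ K) (c₁ c₂ : Fin q)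
    {R R' : Fin q → ℝ} (h : ∀ c, R' c ≤ R c) (h₂ : R' c₂ = R c₂) :
    pottsDefect q β K c₁ c₂ R' ≤ pottsDefect q β K c₁ c₂ R := by
  have hs := mul_le_mul_of_nonneg_left
    (Finset.sum_le_sum fun c (_ : c ∈ Finset.univ) => h c) (sub_nonneg.2 hK)
  have h1 := mul_le_mul_of_nonneg_left (h c₁) (sub_nonneg.2 hβ)
  simp only [pottsDefect_apply, pottsMap_apply, h₂]
  linarith

theorem exists_mem_exSet_le {q : ℕ} {α : ℝ} (Φ : (Fin q → ℝ) →ₗ[ℝ] ℝ)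
    {c₂ c' : Fin q} (hc : c' ≠ c₂) {y : Fin q → ℝ} (h₂ : y c₂ = 1) (h' : y c' = α)
    (hy : ∀ c, 1 ≤ y c ∧ y c ≤ α) : ∃ v ∈ exSet q c₂ α, Φ v ≤ Φ y := by
  classical
  let φ : Fin q → ℝ := fun c => Φ (Pi.single c 1)
  have hΦ : ∀ x, Φ x = ∑ c, x c * φ c := fun x => by
    rw [LinearMap.pi_apply_eq_sum_univ Φ x]
    refine Finset.sum_congr rfl fun c _ => ?_
    simp only [φ, smul_eq_mul]
    congr 2
    ext j
    simp [Pi.single_apply, eq_comm]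
  refine ⟨fun c => if c = c₂ then 1 else if c = c' then α else if 0 ≤ φ c then 1 else α,
    ⟨fun c => ?_, by simp, c', by simp [hc]⟩, ?_⟩
  · beta_reduce
    split_ifs <;> simp
  · rw [hΦ, hΦ]
    refine Finset.sum_le_sum fun c _ => ?_
    split_ifs with h1 h2 h3
    · rw [h1, h₂]
    · rw [h2, h']
    · exact mul_le_mul_of_nonneg_right (hy c).1 h3
    · exact mul_le_mul_of_nonpos_right (hy c).2 (not_le.1 h3).le

theorem pottsDefect_nonneg_of_exSet {q : ℕ} (hq : 2 ≤ q) {α β K : ℝ} (hα : 1 < α) (hβ0 : 0 < β)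
    (hβ1 : β < 1) (hK : 1 ≤ K) (c₁ c₂ : Fin q) {a : Fin q → ℝ} (ha : ∀ c, 0 ≤ a c)
    (hEx : ∀ v ∈ exSet q c₂ α, 0 ≤ pottsDefect q β K c₁ c₂ (fun c => a c * pottsMap q β v c))
    {x : Fin q → ℝ} (hx : ∀ c, 0 < x c) (hxα : ∀ i j, x i ≤ α * x j) :
    0 ≤ pottsDefect q β K c₁ c₂ (fun c => a c * pottsMap q β x c) := by
  classical
  have hα0 : 0 < α := by linarith
  have hne := univ_erase_nonempty hq c₂
  obtain ⟨c', hc', hmax⟩ := Finset.exists_max_image (Finset.univ.erase c₂) x hne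
  have hcc : c' ≠ c₂ := (Finset.mem_erase.1 hc').1
  set m : ℝ := x c' / α with hm
  have hm0 : 0 < m := div_pos (hx c') hα0
  have hmle : ∀ c, m ≤ x c := fun c => by
    rw [hm, div_le_iff₀ hα0, mul_comm]; exact hxα c' c
  have hmα : m * α = x c' := by rw [hm]; field_simp
  set x' : Fin q → ℝ := Function.update x c₂ m with hx'
  have hxpos' : ∀ c, 0 < x' c := fun c => by
    by_cases h : c = c₂
    · subst h; simp [hx', hm0]
    · simp [hx', h, hx]
  let Φ : (Fin q → ℝ) →ₗ[ℝ] ℝ :=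
    pottsDefect q β K c₁ c₂ ∘ₗ (LinearMap.pi fun c => a c • (LinearMap.proj c ∘ₗ pottsMap q β))
  have hΦ : ∀ z, Φ z = pottsDefect q β K c₁ c₂ (fun c => a c * pottsMap q β z c) := fun z => rfl
  have hΦx' : 0 ≤ Φ x' := by
    obtain ⟨v, hv, hle⟩ := exists_mem_exSet_le (α := α) Φ hcc (y := m⁻¹ • x')
      (by simp [hx', hm0.ne'])
      (by simp only [hx', Pi.smul_apply, Function.update_of_ne hcc, smul_eq_mul, ← hmα]
          field_simp)
      (fun c => by
        simp only [Pi.smul_apply, smul_eq_mul]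
        rw [inv_mul_eq_div, one_le_div hm0, div_le_iff₀ hm0, mul_comm α, hmα]
        by_cases h : c = c₂
        · subst h
          simp only [hx', Function.update_self, le_refl, true_and]
          exact hmle c'
        · simp only [hx', Function.update_of_ne h]
          exact ⟨hmle c, hmax c (by simp [h])⟩)
    have h0 := (hEx v hv).trans hle
    rw [map_smul, smul_eq_mul] at h0
    exact nonneg_of_mul_nonneg_right h0 (inv_pos.2 hm0)
  have hT' := pottsMap_pos hq hβ0.le hxpos'
  have hT := pottsMap_pos hq hβ0.le hx
  set r : ℝ := pottsMap q β x c₂ / pottsMap q β x' c₂ with hr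
  have hr0 : 0 < r := div_pos (hT c₂) (hT' c₂)
  have hsum : ∑ c, x' c = ∑ c, x c - (x c₂ - m) := by
    rw [← Finset.add_sum_erase _ x (Finset.mem_univ c₂),
      ← Finset.add_sum_erase _ x' (Finset.mem_univ c₂),
      Finset.sum_congr rfl fun c (hc : c ∈ Finset.univ.erase c₂) =>
        show x' c = x c from Function.update_of_ne (Finset.mem_erase.1 hc).1 _ _]
    simp only [hx', Function.update_self]
    ring
  have hcomp : ∀ c, r * pottsMap q β x' c ≤ pottsMap q β x c := fun c => by
    by_cases h : c = c₂
    · subst h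
      rw [hr, div_mul_cancel₀ _ (hT' c).ne']
    · rw [hr, div_mul_eq_mul_div, div_le_iff₀ (hT' c₂)]
      have e1 : pottsMap q β x' c = pottsMap q β x c - (x c₂ - m) := by
        rw [pottsMap_apply, pottsMap_apply, hsum, hx', Function.update_of_ne h]; ring
      have e2 : pottsMap q β x' c₂ = pottsMap q β x c₂ - β * (x c₂ - m) := by
        rw [pottsMap_apply, pottsMap_apply, hsum, hx', Function.update_self]; ring
      have hkey : β * pottsMap q β x c ≤ pottsMap q β x c₂ := by
        have hS : x c₂ ≤ ∑ c, x c :=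
          Finset.single_le_sum (fun c _ => (hx c).le) (Finset.mem_univ c₂)
        simp only [pottsMap_apply]
        nlinarith [mul_nonneg (mul_nonneg hβ0.le (sub_nonneg.2 hβ1.le)) (hx c).le,
          mul_nonneg (sub_nonneg.2 hβ1.le) (sub_nonneg.2 hS)]
      rw [e1, e2]
      nlinarith [mul_nonneg (sub_nonneg.2 hkey) (sub_nonneg.2 (hmle c₂))]
  rw [← hΦ]
  calc 0 ≤ r * Φ x' := mul_nonneg hr0.le hΦx'
    _ = pottsDefect q β K c₁ c₂ (fun c => a c * (r * pottsMap q β x' c)) := by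
      rw [← smul_eq_mul, ← map_smul, hΦ]
      simp
    _ ≤ Φ x := by
      rw [hΦ]
      refine pottsDefect_mono hβ1.le hK c₁ c₂
        (fun c => mul_le_mul_of_nonneg_left (hcomp c) (ha c)) ?_
      rw [hr, div_mul_cancel₀ _ (hT' c₂).ne']

theorem pottsDefect_prod_nonneg {q d : ℕ} (hq : 2 ≤ q) {α β K : ℝ} (hα : 1 < α) (hβ0 : 0 < β)
    (hβ1 : β < 1) (hK : 1 ≤ K) (c₁ c₂ : Fin q)
    (hEx : ∀ p : Fin d → Fin q → ℝ, (∀ k, p k ∈ exSet q c₂ α) →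
      0 ≤ pottsDefect q β K c₁ c₂ (pottsProd q d β p))
    (s : Finset (Fin d)) (p : Fin d → Fin q → ℝ) (hp : ∀ k c, 0 < p k c)
    (hpα : ∀ k i j, p k i ≤ α * p k j) (hs : ∀ k, k ∉ s → p k ∈ exSet q c₂ α) :
    0 ≤ pottsDefect q β K c₁ c₂ (pottsProd q d β p) := by
  classical
  induction s using Finset.induction_on generalizing p with
  | empty => exact hEx p fun k => hs k (by simp)
  | insert k s hk ih =>
    have hsplit : ∀ v, pottsProd q d β (Function.update p k v) = fun c =>
        (∏ j ∈ Finset.univ.erase k, pottsMap q β (p j) c) * pottsMap q β v c := fun v => by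
      ext c
      rw [pottsProd, ← Finset.prod_erase_mul _ _ (Finset.mem_univ k), Function.update_self]
      congr 1
      refine Finset.prod_congr rfl fun j hj => ?_
      rw [Function.update_of_ne (Finset.mem_erase.1 hj).1]
    rw [← Function.update_eq_self k p, hsplit]
    refine pottsDefect_nonneg_of_exSet hq hα hβ0 hβ1 hK c₁ c₂
      (fun c => Finset.prod_nonneg fun j _ => (pottsMap_pos hq hβ0.le (hp j) c).le)
      (fun v hv => ?_) (hp k) (hpα k)
    rw [← hsplit]
    have hv1 := one_le_of_mem_exSet hα hv
    refine ih _ (fun j c => ?_) (fun j i i' => ?_) fun j hj => ?_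
    · rcases eq_or_ne j k with rfl | h
      · rw [Function.update_self]; linarith [hv1 c]
      · rw [Function.update_of_ne h]; exact hp j c
    · rcases eq_or_ne j k with rfl | h
      · rw [Function.update_self]
        have hi : v i ≤ α := by rcases hv.1 i with h | h <;> rw [h]; exact hα.le
        nlinarith [hv1 i']
      · rw [Function.update_of_ne h]; exact hpα j i i'
    · rcases eq_or_ne j k with rfl | h
      · rwa [Function.update_self]
      · rw [Function.update_of_ne h]
        exact hs j (by simp [h, hj])

theorem pottsMap_prod_le {q d : ℕ} (hq : 2 ≤ q) {α β K : ℝ} (hα : 1 < α) (hβ0 : 0 < β)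
    (hβ1 : β < 1) (hK : 1 ≤ K) (c₁ c₂ : Fin q)
    (hEx : ∀ p : Fin d → Fin q → ℝ, (∀ k, p k ∈ exSet q c₂ α) → hfun q d β c₁ c₂ p ≤ K)
    (p : Fin d → Fin q → ℝ) (hp : ∀ k c, 0 < p k c) (hpα : ∀ k i j, p k i ≤ α * p k j) :
    pottsMap q β (pottsProd q d β p) c₁ ≤ K * pottsMap q β (pottsProd q d β p) c₂ := by
  rw [← sub_nonneg, ← pottsDefect_apply]
  refine pottsDefect_prod_nonneg hq hα hβ0 hβ1 hK c₁ c₂ (fun p' hp' => ?_) Finset.univ p hp hpα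
    fun k hk => absurd (Finset.mem_univ k) hk
  have hppos' : ∀ k c, 0 < p' k c := fun k c => by linarith [one_le_of_mem_exSet hα (hp' k) c]
  have h := hEx p' hp'
  rw [hfun_eq_div hq hβ0.le c₁ c₂ hppos',
    div_le_iff₀ (pottsMap_pos hq hβ0.le (pottsProd_pos hq hβ0.le hppos') c₂)] at h
  rw [pottsDefect_apply]
  linarith

/-- The vertices of the `d`-ary tree of height `n`. -/
abbrev TreeVertex (d n : ℕ) : Type := Σ k : Fin (n + 1), (Fin k → Fin d)

/-- The edges of the `d`-ary tree of height `n`, indexed by their lower endpoints. -/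
abbrev TreeEdge (d n : ℕ) : Type := Σ k : Fin n, (Fin (k + 1) → Fin d)

/-- A vertex of the tree of height `n + 1` is the root or a vertex of one of the subtrees. -/
def treeVertexOfOption (d n : ℕ) : Option (Fin d × TreeVertex d n) → TreeVertex d (n + 1)
  | none => ⟨⟨0, (n + 1).succ_pos⟩, Fin.elim0⟩
  | some (i, v) => ⟨v.1.succ, Fin.cons (α := fun _ => Fin d) i v.2⟩

theorem treeVertexOfOption_bijective (d n : ℕ) :
    Function.Bijective (treeVertexOfOption d n) := by
  constructor
  · rintro (_ | ⟨i, ⟨k, f⟩⟩) (_ | ⟨j, ⟨l, g⟩⟩) h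
    · rfl
    · have := congrArg (fun v => (v.1 : ℕ)) h
      simp [treeVertexOfOption] at this
    · have := congrArg (fun v => (v.1 : ℕ)) h
      simp [treeVertexOfOption] at this
    · simp only [treeVertexOfOption, Sigma.mk.injEq, Fin.succ_inj] at h
      obtain ⟨rfl, h⟩ := h
      have h := Fin.cons_injective2 (α := fun _ => Fin d) (eq_of_heq h)
      rw [h.1, h.2]
  · rintro ⟨k, f⟩
    induction k using Fin.cases with
    | zero => exact ⟨none, Sigma.ext rfl (heq_of_eq (funext fun i => i.elim0))⟩
    | succ k =>
      exact ⟨some (f (0 : Fin (k + 1)), ⟨k, Fin.tail (α := fun _ => Fin d) f⟩),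
        Sigma.ext rfl (heq_of_eq (Fin.cons_self_tail (α := fun _ => Fin d) f))⟩

/-- An edge of the tree of height `n + 1` is incident to the root or lies in a subtree. -/
def treeEdgeOfSum (d n : ℕ) : Fin d ⊕ (Fin d × TreeEdge d n) → TreeEdge d (n + 1)
  | Sum.inl i => ⟨0, fun _ => i⟩
  | Sum.inr (i, e) => ⟨e.1.succ, Fin.cons (α := fun _ => Fin d) i e.2⟩

theorem treeEdgeOfSum_bijective (d n : ℕ) : Function.Bijective (treeEdgeOfSum d n) := by
  constructor
  · rintro (i | ⟨i, ⟨k, f⟩⟩) (j | ⟨j, ⟨l, g⟩⟩) h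
    · simp only [treeEdgeOfSum, Sigma.mk.injEq, true_and] at h
      rw [congrFun (eq_of_heq h) 0]
    · have := congrArg (fun v => (v.1 : ℕ)) h
      simp [treeEdgeOfSum] at this
    · have := congrArg (fun v => (v.1 : ℕ)) h
      simp [treeEdgeOfSum] at this
    · simp only [treeEdgeOfSum, Sigma.mk.injEq, Fin.succ_inj] at h
      obtain ⟨rfl, h⟩ := h
      have h := Fin.cons_injective2 (α := fun _ => Fin d) (eq_of_heq h)
      rw [h.1, h.2]
  · rintro ⟨k, f⟩
    induction k using Fin.cases with
    | zero =>
      refine ⟨Sum.inl (f 0), Sigma.ext rfl (heq_of_eq (funext fun i => ?_))⟩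
      exact congrArg f (Subsingleton.elim (α := Fin 1) 0 i)
    | succ k =>
      exact ⟨Sum.inr (f 0, ⟨k, Fin.tail (α := fun _ => Fin d) f⟩),
        Sigma.ext rfl (heq_of_eq (Fin.cons_self_tail (α := fun _ => Fin d) f))⟩

/-- The root of the tree of height `n`. -/
def treeRoot (d n : ℕ) : TreeVertex d n := ⟨⟨0, n.succ_pos⟩, Fin.elim0⟩

/-- The leaf of the tree of height `n` reached by the path `f`. -/
def treeLeaf {d n : ℕ} (f : Fin n → Fin d) : TreeVertex d n := ⟨⟨n, n.lt_succ_self⟩, f⟩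

/-- The Potts interaction between neighbouring colours. -/
noncomputable def pottsInteraction {q : ℕ} (β : ℝ) (c c' : Fin q) : ℝ :=
  if c' = c then β else 1

theorem treeWeight_eq_prod (q d n : ℕ) (β : ℝ) (σ : TreeVertex d n → Fin q) :
    treeWeight q d n β σ = ∏ e : TreeEdge d n,
      pottsInteraction β (σ ⟨e.1.castSucc, fun i => e.2 i.castSucc⟩) (σ ⟨e.1.succ, e.2⟩) := by
  simp only [treeWeight, pottsInteraction]
  rw [Finset.prod_ite, Finset.prod_const, Finset.prod_const_one, mul_one]

theorem treeWeight_succ (q d n : ℕ) (β : ℝ) (σ : TreeVertex d (n + 1) → Fin q) :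
    treeWeight q d (n + 1) β σ = ∏ i,
      (pottsInteraction β (σ (treeVertexOfOption d n none))
          (σ (treeVertexOfOption d n (some (i, treeRoot d n)))) *
        treeWeight q d n β fun v => σ (treeVertexOfOption d n (some (i, v)))) := by
  rw [treeWeight_eq_prod, ← (treeEdgeOfSum_bijective d n).prod_comp, Fintype.prod_sum_type,
    Fintype.prod_prod_type, Finset.prod_mul_distrib]
  congr 1
  · refine Finset.prod_congr rfl fun i _ => ?_
    congr 2
    · exact Sigma.ext rfl (heq_of_eq (funext fun j => j.elim0))
    · refine Sigma.ext rfl (heq_of_eq (funext fun j => ?_))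
      exact Fin.cases rfl (fun j => j.elim0) j
  · refine Finset.prod_congr rfl fun i _ => ?_
    rw [treeWeight_eq_prod]
    refine Finset.prod_congr rfl fun e _ => ?_
    congr 2
    refine Sigma.ext rfl (heq_of_eq (funext fun j => ?_))
    exact Fin.cases rfl (fun j => rfl) j

/-- The partition function of the tree with the root and the leaves pinned. -/
noncomputable def treePartition (q d n : ℕ) (β : ℝ) (τ : (Fin n → Fin d) → Fin q)
    (c : Fin q) : ℝ :=
  ∑ σ : TreeVertex d n → Fin q,
    if σ (treeRoot d n) = c ∧ ∀ f, σ (treeLeaf f) = τ f then treeWeight q d n β σ else 0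

theorem condRootProb_eq (q d n : ℕ) (β : ℝ) (τ : (Fin n → Fin d) → Fin q) (c : Fin q) :
    condRootProb q d n β τ c =
      treePartition q d n β τ c / ∑ c', treePartition q d n β τ c' := by
  rw [condRootProb]
  congr 1
  · rw [Finset.sum_filter]
    rfl
  · simp only [treePartition]
    rw [Finset.sum_comm, Finset.sum_filter]
    refine Finset.sum_congr rfl fun σ _ => ?_
    simp only [ite_and, Finset.sum_ite_eq, Finset.mem_univ, if_true]
    rfl

/-- A configuration on the tree of height `n + 1` is a root colour together with
configurations on the subtrees. -/
noncomputable def treeConfigEquiv (q d n : ℕ) :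
    Fin q × (Fin d → TreeVertex d n → Fin q) ≃ (TreeVertex d (n + 1) → Fin q) :=
  (Equiv.prodCongr (Equiv.refl _) (Equiv.curry _ _ _).symm).trans <|
    (Equiv.piOptionEquivProd (β := fun _ => Fin q)).symm.trans <|
      (Equiv.ofBijective _ (treeVertexOfOption_bijective d n)).arrowCongr (Equiv.refl _)

theorem treeConfigEquiv_none (q d n : ℕ) (x : Fin q × (Fin d → TreeVertex d n → Fin q)) :
    treeConfigEquiv q d n x (treeVertexOfOption d n none) = x.1 := by
  have : (Equiv.ofBijective _ (treeVertexOfOption_bijective d n)).symm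
      (treeVertexOfOption d n none) = none :=
    Equiv.ofBijective_symm_apply_apply _ (treeVertexOfOption_bijective d n) _
  simp [treeConfigEquiv, this]

theorem treeConfigEquiv_some (q d n : ℕ) (x : Fin q × (Fin d → TreeVertex d n → Fin q))
    (i : Fin d) (v : TreeVertex d n) :
    treeConfigEquiv q d n x (treeVertexOfOption d n (some (i, v))) = x.2 i v := by
  have : (Equiv.ofBijective _ (treeVertexOfOption_bijective d n)).symm
      (treeVertexOfOption d n (some (i, v))) = some (i, v) :=
    Equiv.ofBijective_symm_apply_apply _ (treeVertexOfOption_bijective d n) _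
  simp [treeConfigEquiv, this]

theorem forall_treeLeaf_succ {q d n : ℕ} (σ : TreeVertex d (n + 1) → Fin q)
    (τ : (Fin (n + 1) → Fin d) → Fin q) :
    (∀ f, σ (treeLeaf f) = τ f) ↔ ∀ i (f : Fin n → Fin d),
      σ (treeVertexOfOption d n (some (i, treeLeaf f))) =
        τ (Fin.cons (α := fun _ => Fin d) i f) :=
  Fin.forall_fin_succ_pi (α := fun _ => Fin d)

theorem treePartition_succ (q d n : ℕ) (β : ℝ) (τ : (Fin (n + 1) → Fin d) → Fin q)
    (c : Fin q) :
    treePartition q d (n + 1) β τ c = ∏ i, pottsMap q β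
      (treePartition q d n β fun f => τ (Fin.cons (α := fun _ => Fin d) i f)) c := by
  have hmap : ∀ i, pottsMap q β
      (treePartition q d n β fun f => τ (Fin.cons (α := fun _ => Fin d) i f)) c =
      ∑ s : TreeVertex d n → Fin q,
        if ∀ f, s (treeLeaf f) = τ (Fin.cons (α := fun _ => Fin d) i f) then
          pottsInteraction β c (s (treeRoot d n)) * treeWeight q d n β s else 0 := fun i => by
    simp only [pottsMap_apply, treePartition]
    rw [Finset.sum_comm, Finset.mul_sum, ← Finset.sum_sub_distrib]
    refine Finset.sum_congr rfl fun s _ => ?_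
    simp only [ite_and, Finset.sum_ite_eq, Finset.mem_univ, if_true, pottsInteraction]
    split_ifs <;> ring
  simp only [hmap]
  rw [Finset.prod_univ_sum, Fintype.piFinset_univ, treePartition,
    ← (treeConfigEquiv q d n).sum_comp, Fintype.sum_prod_type, Finset.sum_comm]
  refine Finset.sum_congr rfl fun s _ => ?_
  have hroot : treeRoot d (n + 1) = treeVertexOfOption d n none := rfl
  simp only [forall_treeLeaf_succ, treeWeight_succ, hroot, treeConfigEquiv_none,
    treeConfigEquiv_some, ite_and, Finset.sum_ite_eq', Finset.mem_univ,
    if_true]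
  rw [Finset.prod_ite_zero]
  simp

theorem treePartition_nonneg {q d n : ℕ} {β : ℝ} (hβ : 0 ≤ β) (τ : (Fin n → Fin d) → Fin q)
    (c : Fin q) : 0 ≤ treePartition q d n β τ c := by
  refine Finset.sum_nonneg fun σ _ => ?_
  split_ifs
  · exact pow_nonneg hβ _
  · exact le_rfl

theorem treePartition_zero_pos {q d : ℕ} {β : ℝ} (hβ : 0 < β) (τ : (Fin 0 → Fin d) → Fin q) :
    0 < treePartition q d 0 β τ (τ Fin.elim0) := by
  refine lt_of_lt_of_le (b := treeWeight q d 0 β fun _ => τ Fin.elim0) (pow_pos hβ _) ?_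
  have h : (fun _ : TreeVertex d 0 => τ Fin.elim0) (treeRoot d 0) = τ Fin.elim0 ∧
      ∀ f, (fun _ : TreeVertex d 0 => τ Fin.elim0) (treeLeaf f) = τ f :=
    ⟨rfl, fun f => congrArg τ (Subsingleton.elim _ _)⟩
  refine le_trans (le_of_eq (if_pos h).symm) (Finset.single_le_sum
    (a := fun _ : TreeVertex d 0 => τ Fin.elim0)
    (f := fun σ : TreeVertex d 0 → Fin q =>
      if σ (treeRoot d 0) = τ Fin.elim0 ∧ ∀ f, σ (treeLeaf f) = τ f then
        treeWeight q d 0 β σ else 0) (fun σ _ => ?_) (Finset.mem_univ _))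
  split_ifs
  · exact pow_nonneg hβ.le _
  · exact le_rfl

theorem pottsMap_ge_of_nonneg {q : ℕ} {β : ℝ} (hβ : β ≤ 1) {x : Fin q → ℝ}
    (hx : ∀ c, 0 ≤ x c) (c : Fin q) : β * ∑ c', x c' ≤ pottsMap q β x c := by
  rw [pottsMap_apply]
  have := Finset.single_le_sum (fun c _ => hx c) (Finset.mem_univ c)
  nlinarith

theorem sum_treePartition_pos {q d : ℕ} (hq : 0 < q) {β : ℝ} (hβ0 : 0 < β) (hβ1 : β ≤ 1) (n : ℕ)
    (τ : (Fin n → Fin d) → Fin q) : 0 < ∑ c, treePartition q d n β τ c := by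
  induction n with
  | zero =>
    exact Finset.sum_pos' (fun c _ => treePartition_nonneg hβ0.le τ c)
      ⟨_, Finset.mem_univ _, treePartition_zero_pos hβ0 τ⟩
  | succ n ih =>
    refine Finset.sum_pos (fun c _ => ?_) ⟨⟨0, hq⟩, Finset.mem_univ _⟩
    rw [treePartition_succ]
    exact Finset.prod_pos fun i _ => (mul_pos hβ0 (ih _)).trans_le
      (pottsMap_ge_of_nonneg hβ1 (treePartition_nonneg hβ0.le _) c)

theorem treePartition_succ_pos {q d : ℕ} (hq : 0 < q) {β : ℝ} (hβ0 : 0 < β) (hβ1 : β ≤ 1)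
    (n : ℕ) (τ : (Fin (n + 1) → Fin d) → Fin q) (c : Fin q) :
    0 < treePartition q d (n + 1) β τ c := by
  rw [treePartition_succ]
  exact Finset.prod_pos fun i _ => (mul_pos hβ0 (sum_treePartition_pos hq hβ0 hβ1 n _)).trans_le
    (pottsMap_ge_of_nonneg hβ1 (treePartition_nonneg hβ0.le _) c)

theorem treePartition_succ_le {q d : ℕ} {β : ℝ} (hβ0 : 0 < β) (hβ1 : β ≤ 1)
    (n : ℕ) (τ : (Fin (n + 1) → Fin d) → Fin q) (c₁ c₂ : Fin q) :
    treePartition q d (n + 1) β τ c₁ ≤ (β⁻¹) ^ d * treePartition q d (n + 1) β τ c₂ := by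
  have hd : (β⁻¹) ^ d = ∏ _i : Fin d, β⁻¹ := by simp
  rw [treePartition_succ, treePartition_succ, hd, ← Finset.prod_mul_distrib]
  have hn := fun i => treePartition_nonneg (d := d) (n := n) hβ0.le
    fun f => τ (Fin.cons (α := fun _ => Fin d) i f)
  have hge := fun i c => pottsMap_ge_of_nonneg hβ1 (hn i) c
  have hs := fun i => Finset.sum_nonneg fun c (_ : c ∈ Finset.univ) => hn i c
  refine Finset.prod_le_prod (fun i _ => (mul_nonneg hβ0.le (hs i)).trans (hge i c₁))
    fun i _ => ?_
  rw [inv_mul_eq_div, le_div_iff₀ hβ0, mul_comm]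
  refine le_trans (mul_le_mul_of_nonneg_left ?_ hβ0.le) (hge i c₂)
  rw [pottsMap_apply]
  linarith [mul_nonneg (sub_nonneg.2 hβ1) (hn i c₁)]

theorem treePartition_add_two_le {q d : ℕ} (hq : 2 ≤ q) {α β K : ℝ} (hα : 1 < α) (hβ0 : 0 < β)
    (hβ1 : β < 1) (hK : 1 ≤ K)
    (hEx : ∀ c₁ c₂ : Fin q, ∀ p : Fin d → Fin q → ℝ, (∀ k, p k ∈ exSet q c₂ α) →
      hfun q d β c₁ c₂ p ≤ K) (n : ℕ)
    (h : ∀ τ c₁ c₂, treePartition q d (n + 1) β τ c₁ ≤ α * treePartition q d (n + 1) β τ c₂)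
    (τ : (Fin (n + 3) → Fin d) → Fin q) (c₁ c₂ : Fin q) :
    treePartition q d (n + 3) β τ c₁ ≤ K ^ d * treePartition q d (n + 3) β τ c₂ := by
  have hd : K ^ d = ∏ _i : Fin d, K := by simp
  have hpos := treePartition_succ_pos (d := d) (by omega : 0 < q) hβ0 hβ1.le
  rw [treePartition_succ, treePartition_succ, hd, ← Finset.prod_mul_distrib]
  refine Finset.prod_le_prod (fun i _ => (pottsMap_pos hq hβ0.le (hpos (n + 1) _) c₁).le)
    fun i _ => ?_
  have hR : (treePartition q d (n + 2) β fun f => τ (Fin.cons (α := fun _ => Fin d) i f)) =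
      pottsProd q d β fun k => treePartition q d (n + 1) β fun f =>
        τ (Fin.cons (α := fun _ => Fin d) i (Fin.cons (α := fun _ => Fin d) k f)) := by
    ext c
    rw [treePartition_succ, pottsProd]
  rw [hR]
  exact pottsMap_prod_le hq hα hβ0 hβ1 hK c₁ c₂ (hEx c₁ c₂) _ (fun k => hpos n _)
    fun k => h _

/-- The vectors with entries in `{1, α}` described by a Boolean pattern. -/
noncomputable def exPattern {q d : ℕ} (s : Fin d → Fin q → Bool) (α : ℝ) (k : Fin d)
    (c : Fin q) : ℝ :=
  if s k c then α else 1

theorem exists_exPattern_eq {q d : ℕ} {α : ℝ} (c₂ : Fin q) {p : Fin d → Fin q → ℝ}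
    (hp : ∀ k, p k ∈ exSet q c₂ α) : ∃ s, exPattern s α = p := by
  classical
  refine ⟨fun k c => decide (p k c = α), funext fun k => funext fun c => ?_⟩
  rcases (hp k).1 c with h | h
  · simp only [exPattern, decide_eq_true_eq]
    split_ifs with h'
    · exact h'.symm
    · exact h.symm
  · simp [exPattern, h]

theorem exPattern_pos {q d : ℕ} (s : Fin d → Fin q → Bool) {α : ℝ} (hα : 0 < α) (k : Fin d)
    (c : Fin q) : 0 < exPattern s α k c := by
  rw [exPattern]
  split_ifs
  · exact hα
  · exact one_pos

theorem continuousAt_hfun_exPattern {q d : ℕ} (hq : 2 ≤ q) {β : ℝ} (hβ : 0 ≤ β)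
    (c₁ c₂ : Fin q) (s : Fin d → Fin q → Bool) {L : ℝ} (hL : 0 < L) :
    ContinuousAt (fun α => hfun q d β c₁ c₂ (exPattern s α)) L := by
  have hpat : ∀ k c, Continuous fun α => exPattern s α k c := fun k c => by
    simp only [exPattern]
    split_ifs <;> fun_prop
  have hmap : ∀ c, Continuous fun α => pottsMap q β (pottsProd q d β (exPattern s α)) c := by
    intro c
    simp only [pottsMap_apply, pottsProd]
    fun_prop
  have hpos := pottsMap_pos hq hβ (pottsProd_pos hq hβ (exPattern_pos s hL)) c₂
  refine ((hmap c₁).continuousAt.div (hmap c₂).continuousAt hpos.ne').congr ?_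
  filter_upwards [lt_mem_nhds hL] with α hα
  exact (hfun_eq_div hq hβ c₁ c₂ (exPattern_pos s hα)).symm

theorem exists_uniform_hfun_bound {q d : ℕ} (hq : 2 ≤ q) (hd : d ≠ 0) {β : ℝ} (hβ : 0 ≤ β)
    {L : ℝ} (hL : 1 < L)
    (hcond : ∀ c₁ c₂ : Fin q, ∀ p : Fin d → Fin q → ℝ, (∀ k, p k ∈ exSet q c₂ L) →
      hfun q d β c₁ c₂ p < L ^ (1 / (d : ℝ))) :
    ∃ K, 1 ≤ K ∧ K ^ d < L ∧ ∀ᶠ α in nhds L, ∀ c₁ c₂ : Fin q, ∀ p : Fin d → Fin q → ℝ,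
      (∀ k, p k ∈ exSet q c₂ α) → hfun q d β c₁ c₂ p ≤ K := by
  have hL0 : 0 < L := one_pos.trans hL
  have hdpos : (0 : ℝ) < d := by positivity
  have hroot : 1 < L ^ (1 / (d : ℝ)) := Real.one_lt_rpow hL (by positivity)
  let Adm : Fin q → (Fin d → Fin q → Bool) → Prop := fun c₂ s =>
    ∀ k, s k c₂ = false ∧ ∃ c', s k c' = true
  have hadm : ∀ c₂ s, Adm c₂ s → ∀ k, exPattern s L k ∈ exSet q c₂ L := fun c₂ s hs k => by
    refine ⟨fun c' => ?_, by simp [exPattern, (hs k).1], ?_⟩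
    · simp only [exPattern]
      split_ifs <;> simp
    · obtain ⟨c', hc'⟩ := (hs k).2
      exact ⟨c', by simp [exPattern, hc']⟩
  have hK : ∀ᶠ K in nhdsWithin (L ^ (1 / (d : ℝ))) (Set.Iio (L ^ (1 / (d : ℝ)))),
      ∀ x : Fin q × Fin q × (Fin d → Fin q → Bool), Adm x.2.1 x.2.2 →
        hfun q d β x.1 x.2.1 (exPattern x.2.2 L) < K := by
    rw [Filter.eventually_all]
    intro x
    by_cases hx : Adm x.2.1 x.2.2
    · filter_upwards [nhdsWithin_le_nhds
        (lt_mem_nhds (hcond x.1 x.2.1 _ (hadm _ _ hx)))] with K hK _ using hK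
    · exact Filter.Eventually.of_forall fun K h => absurd h hx
  obtain ⟨K, hKpat, hKlt, hK1⟩ := (hK.and (eventually_mem_nhdsWithin.and
    (eventually_nhdsWithin_of_eventually_nhds (eventually_gt_nhds hroot)))).exists
  rw [Set.mem_Iio] at hKlt
  refine ⟨K, hK1.le, ?_, ?_⟩
  · calc K ^ d < (L ^ (1 / (d : ℝ))) ^ d := pow_lt_pow_left₀ hKlt (by linarith) hd
      _ = L := by rw [one_div, Real.rpow_inv_natCast_pow hL0.le hd]
  · have hev : ∀ᶠ α in nhds L, ∀ x : Fin q × Fin q × (Fin d → Fin q → Bool), Adm x.2.1 x.2.2 →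
        hfun q d β x.1 x.2.1 (exPattern x.2.2 α) < K := by
      rw [Filter.eventually_all]
      intro x
      by_cases hx : Adm x.2.1 x.2.2
      · filter_upwards [(continuousAt_hfun_exPattern hq hβ x.1 x.2.1 x.2.2 hL0).eventually_lt_const
          (hKpat x hx)] with α hα _ using hα
      · exact Filter.Eventually.of_forall fun α h => absurd h hx
    filter_upwards [hev, lt_mem_nhds hL] with α hα hα1 c₁ c₂ p hp
    obtain ⟨s, rfl⟩ := exists_exPattern_eq c₂ hp
    refine (hα (c₁, c₂, s) fun k => ⟨?_, ?_⟩).le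
    · have h := (hp k).2.1
      simp only [exPattern] at h
      by_contra hne
      simp only [Bool.not_eq_false] at hne
      rw [if_pos hne] at h
      linarith
    · obtain ⟨c', hc'⟩ := (hp k).2.2
      refine ⟨c', ?_⟩
      by_contra hne
      simp only [exPattern] at hc'
      rw [if_neg hne] at hc'
      linarith

/-- Eventually all root marginals are within a factor `α` of each other. -/
def EventuallyRatioLE (q d : ℕ) (β α : ℝ) : Prop :=
  ∀ᶠ n in Filter.atTop, ∀ τ c₁ c₂,
    treePartition q d n β τ c₁ ≤ α * treePartition q d n β τ c₂

theorem eventuallyRatioLE_of_one_lt {q d : ℕ} (hq : 2 ≤ q) (hd : d ≠ 0) {β₀ β : ℝ} (hβ₀ : 0 ≤ β₀)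
    (hβ0 : 0 < β) (hβ1 : β < 1) (hle : β₀ ≤ β)
    (hcond : ∀ α : ℝ, 1 < α → ∀ c₁ c₂ : Fin q, ∀ p : Fin d → Fin q → ℝ,
      (∀ k, p k ∈ exSet q c₂ α) → hfun q d β₀ c₁ c₂ p < α ^ (1 / (d : ℝ)))
    {α : ℝ} (hα : 1 < α) : EventuallyRatioLE q d β α := by
  let A : Set ℝ := {a | 1 ≤ a ∧ EventuallyRatioLE q d β a}
  have hmono : ∀ a b, a ≤ b → EventuallyRatioLE q d β a → EventuallyRatioLE q d β b := by
    intro a b hab h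
    filter_upwards [h] with n hn τ c₁ c₂
    exact (hn τ c₁ c₂).trans
      (mul_le_mul_of_nonneg_right hab (treePartition_nonneg hβ0.le τ c₂))
  have hA : A.Nonempty := by
    refine ⟨(β⁻¹) ^ d, one_le_pow₀ ((one_le_inv₀ hβ0).2 hβ1.le), ?_⟩
    filter_upwards [Filter.eventually_ge_atTop 1] with n hn
    obtain ⟨m, rfl⟩ := Nat.exists_eq_add_of_le' hn
    exact treePartition_succ_le hβ0 hβ1.le m
  have hbdd : BddBelow A := ⟨1, fun a ha => ha.1⟩
  have hL : sInf A ≤ 1 := by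
    by_contra! hL
    obtain ⟨K, hK1, hKL, hev⟩ := exists_uniform_hfun_bound hq hd hβ₀ hL (hcond _ hL)
    obtain ⟨u, hu, hsub⟩ := exists_Ico_subset_of_mem_nhds hev ⟨sInf A + 1, by linarith⟩
    obtain ⟨a, ha, hau⟩ := exists_lt_of_csInf_lt hA hu
    have haL : sInf A ≤ a := csInf_le hbdd ha
    have ha1 : 1 < a := hL.trans_le haL
    have hKA : K ^ d ∈ A := by
      refine ⟨one_le_pow₀ hK1, ?_⟩
      obtain ⟨N, hN⟩ := Filter.eventually_atTop.1 ha.2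
      filter_upwards [Filter.eventually_ge_atTop (N + 3)] with n hn
      obtain ⟨m, rfl⟩ := Nat.exists_eq_add_of_le' (show 3 ≤ n by omega)
      exact treePartition_add_two_le hq ha1 hβ0 hβ1 hK1
        (fun c₁ c₂ p hp => (hfun_antitone_of_mem_exSet hq ha1 hβ₀ hle hβ1.le c₁ c₂ hp).trans
          (hsub ⟨haL, hau⟩ c₁ c₂ p hp)) m (hN (m + 1) (by omega))
    exact absurd (csInf_le hbdd hKA) (not_le.2 hKL)
  obtain ⟨a, ha, hlt⟩ := exists_lt_of_csInf_lt hA (hL.trans_lt hα)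
  exact hmono a α hlt.le ha.2

theorem abs_condRootProb_sub_le {q d n : ℕ} (hq : 0 < q) {β : ℝ} (hβ0 : 0 < β) (hβ1 : β ≤ 1)
    {ε : ℝ} (hε : 0 < ε) (τ : (Fin n → Fin d) → Fin q)
    (h : ∀ c₁ c₂, treePartition q d n β τ c₁ ≤ (1 + ε) * treePartition q d n β τ c₂)
    (c : Fin q) : |condRootProb q d n β τ c - 1 / (q : ℝ)| ≤ ε := by
  have hZ := sum_treePartition_pos hq hβ0 hβ1 n τ
  rw [condRootProb_eq]
  set Z := ∑ c', treePartition q d n β τ c' with hZdef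
  set x := treePartition q d n β τ c with hx
  have hx0 : 0 ≤ x := treePartition_nonneg hβ0.le τ c
  have hq1 : (1 : ℝ) ≤ q := by exact_mod_cast hq
  have h1 : (q : ℝ) * x ≤ (1 + ε) * Z := by
    have := Finset.sum_le_sum fun c' (_ : c' ∈ Finset.univ) => h c c'
    simpa [← Finset.mul_sum] using this
  have h2 : Z ≤ (1 + ε) * (q * x) := by
    have := Finset.sum_le_sum fun c' (_ : c' ∈ Finset.univ) => h c' c
    simp only [Finset.sum_const, Finset.card_univ, Fintype.card_fin, nsmul_eq_mul] at this
    linarith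
  have hq0 : (0 : ℝ) < q := by linarith
  have hxZ : x ≤ Z := Finset.single_le_sum
    (fun c' _ => treePartition_nonneg hβ0.le τ c') (Finset.mem_univ c)
  rw [div_sub_div _ _ hZ.ne' hq0.ne', abs_le, le_div_iff₀ (mul_pos hZ hq0),
    div_le_iff₀ (mul_pos hZ hq0)]
  have h3 : ε * Z ≤ ε * (Z * q) :=
    mul_le_mul_of_nonneg_left (le_mul_of_one_le_right hZ.le hq1) hε.le
  have h4 : ε * (q * x) ≤ ε * (Z * q) := by
    refine mul_le_mul_of_nonneg_left ?_ hε.le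
    rw [mul_comm]
    exact mul_le_mul_of_nonneg_right hxZ hq0.le
  constructor <;> linarith

/-- If the pair `(q,d)` satisfies Condition `𝒞(α)` for every `α > 1` (with
`β_* = max{1 - q/(d+1), 0}`), then the `q`-state Potts model has uniqueness
on the infinite `d`-ary tree for every `β ∈ (0,1)` with `β ≥ β_*`. -/
theorem potts_uniqueness_of_condition (q d : ℕ) (hq : 3 ≤ q) (hd : 2 ≤ d)
    (hcond : ∀ α : ℝ, 1 < α → ∀ c₁ c₂ : Fin q, ∀ p : Fin d → Fin q → ℝ,
      (∀ k, p k ∈ exSet q c₂ α) →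
      hfun q d (max (1 - (q : ℝ) / ((d : ℝ) + 1)) 0) c₁ c₂ p < α ^ (1 / (d : ℝ)))
    (β : ℝ) (hβ0 : 0 < β) (hβ1 : β < 1)
    (hβstar : max (1 - (q : ℝ) / ((d : ℝ) + 1)) 0 ≤ β) :
    ∀ c : Fin q,
      Filter.limsup
        (fun n : ℕ =>
          ⨆ τ : (Fin n → Fin d) → Fin q,
            |condRootProb q d n β τ c - 1 / (q : ℝ)|)
        Filter.atTop = 0 := by
  intro c
  have hq2 : 2 ≤ q := by omega
  have hne : ∀ n, Nonempty ((Fin n → Fin d) → Fin q) := fun n => ⟨fun _ => c⟩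
  refine Filter.Tendsto.limsup_eq ?_
  rw [Metric.tendsto_nhds]
  intro ε hε
  filter_upwards [eventuallyRatioLE_of_one_lt hq2 (by omega) (le_max_right _ _) hβ0 hβ1 hβstar
    hcond (show (1 : ℝ) < 1 + ε / 2 by linarith)] with n hn
  have hle : (⨆ τ : (Fin n → Fin d) → Fin q, |condRootProb q d n β τ c - 1 / (q : ℝ)|) ≤ ε / 2 :=
    ciSup_le fun τ => abs_condRootProb_sub_le (by omega) hβ0 hβ1.le (half_pos hε) τ (hn τ) c
  rw [Real.dist_eq, sub_zero, abs_of_nonneg (Real.iSup_nonneg fun τ => abs_nonneg _)]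
  linarith
end

section
/- Let q = 3 and d ≥ 2, and set β_* = max{1 − 3/(d+1), 0}. Then for every α ∈ (1, 53/27], for all colours c₁, c₂ ∈ [3] and for all p^{(1)},…,p^{(d)} ∈ Ex_{c₂}(α), it holds that h_{c₁,c₂,β_*}(p^{(1)},…,p^{(d)}) < α^{1/d}. -/
open Filter

lemma log_ratio_le {w : ℝ} (h0 : 0 ≤ w) (h1 : w ≤ 1 / 5) :
    Real.log ((1 + w) / (1 - w)) ≤ 2 * w + 3 / 4 * w ^ 3 := by
  have h := Real.log_div_le_sum_range_add h0 (by linarith) 2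
  have hw : 0 < 1 - w ^ 2 := by nlinarith
  have h2 : w ^ 5 / (1 - w ^ 2) ≤ w ^ 3 / 24 := by
    rw [div_le_iff₀ hw]
    have h3 : w ^ 2 ≤ 1 / 25 := by nlinarith
    nlinarith [mul_nonneg (pow_nonneg h0 3) (sub_nonneg.mpr h3)]
  norm_num [Finset.sum_range_succ] at h
  linarith

lemma le_log_ratio {y : ℝ} (h0 : 0 ≤ y) (h1 : y < 1) :
    2 * y + 2 / 3 * y ^ 3 ≤ Real.log ((1 + y) / (1 - y)) := by
  have h := Real.sum_range_le_log_div h0 h1 2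
  norm_num [Finset.sum_range_succ] at h
  linarith

/-- The tangent-line bound for `exp` at `log c`, applied to a product. -/
lemma mul_one_add_sum_log_le_prod {ι : Type*} [Fintype ι] {f : ι → ℝ} (hf : ∀ k, 0 < f k)
    {c L : ℝ} (hc : 0 < c) (hL : L ≤ -Real.log c) :
    c * (1 + L + ∑ k, Real.log (f k)) ≤ ∏ k, f k := by
  have hprod : 0 < ∏ k, f k := Finset.prod_pos fun k _ => hf k
  have h := Real.log_le_sub_one_of_pos (div_pos hprod hc)
  rw [Real.log_div hprod.ne' hc.ne', Real.log_prod fun k _ => (hf k).ne'] at h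
  have h2 : 1 + L + ∑ k, Real.log (f k) ≤ (∏ k, f k) / c := by linarith
  rw [le_div_iff₀ hc] at h2
  linarith

/-- A lower bound for `tanh (artanh (1 / s) / d) * d`. -/
noncomputable def rhoBound (d s : ℝ) : ℝ := 1 / s + (1 / 3 - 3 / (7 * d ^ 2)) / s ^ 3

lemma rhoBound_bounds {d s : ℝ} (hd : 2 ≤ d) (hs : 3 ≤ s) :
    0 < rhoBound d s ∧ rhoBound d s ≤ 28 / 27 * (1 / s) := by
  obtain ⟨x, rfl⟩ : ∃ x, d = 2 + x := ⟨d - 2, by ring⟩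
  obtain ⟨y, rfl⟩ : ∃ y, s = 3 + y := ⟨s - 3, by ring⟩
  have hx : 0 ≤ x := by linarith
  have hy : 0 ≤ y := by linarith
  unfold rhoBound
  constructor
  · field_simp
    ring_nf
    positivity
  · rw [← sub_nonneg]
    field_simp
    ring_nf
    positivity

lemma ratio_le_rpow {d s : ℝ} (hd : 2 ≤ d) (hs : 3 ≤ s) :
    (1 + rhoBound d s / d) / (1 - rhoBound d s / d) ≤ ((s + 1) / (s - 1)) ^ (1 / d) := by
  obtain ⟨hρ0, hρ1⟩ := rhoBound_bounds hd hs
  set ρ := rhoBound d s with hρ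
  have hd0 : 0 < d := by linarith
  have ht3 : 1 / s ≤ 1 / 3 := one_div_le_one_div_of_le (by norm_num) hs
  have hτ0 : 0 < ρ / d := by positivity
  have hτ1 : ρ / d ≤ 1 / 5 := by
    rw [div_le_iff₀ hd0]
    linarith
  have hα : (s + 1) / (s - 1) = (1 + 1 / s) / (1 - 1 / s) := by
    have : s - 1 ≠ 0 := by linarith
    field_simp
  have hα0 : 0 < (s + 1) / (s - 1) := div_pos (by linarith) (by linarith)
  rw [← Real.log_le_log_iff (div_pos (by linarith) (by linarith)) (Real.rpow_pos_of_pos hα0 _),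
    Real.log_rpow hα0]
  have hlow := le_log_ratio (y := 1 / s) (by positivity) (by linarith)
  rw [← hα] at hlow
  refine (log_ratio_le hτ0.le hτ1).trans ?_
  refine le_trans ?_ (mul_le_mul_of_nonneg_left hlow (by positivity))
  have hcube : ρ ^ 3 ≤ (28 / 27 * (1 / s)) ^ 3 := pow_le_pow_left₀ hρ0.le hρ1 3
  have hcube' : 3 / 4 * ρ ^ 3 ≤ 6 / 7 * (1 / s) ^ 3 := by
    have : 0 ≤ (1 / s) ^ 3 := by positivity
    nlinarith
  have hexp : 2 * (1 / s) + 2 / 3 * (1 / s) ^ 3 = 2 * ρ + 6 / 7 * (1 / s) ^ 3 / d ^ 2 := by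
    rw [hρ, rhoBound]
    field_simp
    ring
  rw [hexp]
  calc 2 * (ρ / d) + 3 / 4 * (ρ / d) ^ 3 = 1 / d * (2 * ρ + 3 / 4 * ρ ^ 3 / d ^ 2) := by
        field_simp
    _ ≤ _ := by gcongr

/-- Positivity of the affine minorant at the three vertices of the simplex of types. -/
lemma affine_minorant_pos {d s : ℝ} (hd : 2 ≤ d) (hs : 3 ≤ s) {p r E : ℝ}
    (hp : p = (3 + (2 - 1 / d) * rhoBound d s) * ((s - 1) / (s + 1)))
    (hr : r = 2 * (1 + 1 / d) * rhoBound d s * ((2 * s - 1) / (2 * s + 1)))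
    (hE : E = p * (1 + 2 / s + 2 / (3 * s ^ 3)) + r * (1 + 1 / s + 1 / (12 * s ^ 3)) - 3 +
      (2 - 1 / d) * rhoBound d s) :
    0 < E / d - (p + r) * (6 / (3 * d * s + d + 1) + 3 / 4 / (d * s) ^ 3) ∧
    0 < E / d - p * (6 / (3 * d * s - d - 1) + 13 / 10 / (d * s) ^ 3) ∧
    0 < E / d - r * (6 / (3 * d * s - d - 1) + 13 / 10 / (d * s) ^ 3) := by
  obtain ⟨x, rfl⟩ : ∃ x, d = 2 + x := ⟨d - 2, by ring⟩
  obtain ⟨y, rfl⟩ : ∃ y, s = 3 + y := ⟨s - 3, by ring⟩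
  have hx : 0 ≤ x := by linarith
  have hy : 0 ≤ y := by linarith
  subst hE hp hr
  unfold rhoBound
  have e : 3 * (2 + x) * (3 + y) - (2 + x) - 1 = 15 + 8 * x + 6 * y + 3 * x * y := by ring
  rw [e]
  refine ⟨?_, ?_, ?_⟩ <;>
  · field_simp
    ring_nf
    positivity

/-- Factor contributed to `g` by a child vector with exactly one entry `α = (s + 1) / (s - 1)`. -/
noncomputable def oneFactor (d s : ℝ) : ℝ := (3 * d * s - d - 4) / (3 * d * s - d + 2)

/-- Factor contributed to `g` by a child vector with two entries `α = (s + 1) / (s - 1)`. -/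
noncomputable def twoFactor (d s : ℝ) : ℝ := (3 * d * s + d - 2) / (3 * d * s + d + 4)

lemma neg_le_log_ratio {w : ℝ} (h0 : 0 ≤ w) (h1 : w ≤ 1 / 5) :
    -(2 * w + 3 / 4 * w ^ 3) ≤ Real.log ((1 - w) / (1 + w)) := by
  have h := log_ratio_le h0 h1
  rw [← inv_div (1 + w), Real.log_inv]
  linarith

lemma oneFactor_bounds {d s : ℝ} (hd : 2 ≤ d) (hs : 3 ≤ s) :
    0 < oneFactor d s ∧
      -(6 / (3 * d * s - d - 1) + 13 / 10 / (d * s) ^ 3) ≤ Real.log (oneFactor d s) := by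
  have hds : 3 * d ≤ d * s := by nlinarith
  have hpos : 0 < 3 * d * s - d - 1 := by linarith
  have hw0 : 0 < 3 / (3 * d * s - d - 1) := by positivity
  have hw1 : 3 / (3 * d * s - d - 1) ≤ 1 / 5 := by
    rw [div_le_iff₀ hpos]
    linarith
  have hw2 : 3 / (3 * d * s - d - 1) ≤ 6 / 5 / (d * s) := by
    rw [div_le_div_iff₀ hpos (by linarith)]
    linarith
  have heq : oneFactor d s =
      (1 - 3 / (3 * d * s - d - 1)) / (1 + 3 / (3 * d * s - d - 1)) := by
    rw [oneFactor, show 3 * d * s - d - 4 = (3 * d * s - d - 1) - 3 by ring,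
      show 3 * d * s - d + 2 = (3 * d * s - d - 1) + 3 by ring]
    generalize 3 * d * s - d - 1 = D at hpos
    field_simp
  rw [heq]
  refine ⟨div_pos (by linarith) (by linarith), ?_⟩
  refine le_trans ?_ (neg_le_log_ratio hw0.le hw1)
  have hcube := pow_le_pow_left₀ hw0.le hw2 3
  have hds0 : 0 ≤ 1 / (d * s) ^ 3 := by
    have : 0 < d * s := by linarith
    positivity
  have e1 : (6 / 5 / (d * s)) ^ 3 = 216 / 125 * (1 / (d * s) ^ 3) := by
    rw [div_pow]; ring
  have e2 : 13 / 10 / (d * s) ^ 3 = 13 / 10 * (1 / (d * s) ^ 3) := by ring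
  have e3 : 6 / (3 * d * s - d - 1) = 2 * (3 / (3 * d * s - d - 1)) := by ring
  rw [e1] at hcube
  rw [e2, e3]
  linarith

lemma twoFactor_bounds {d s : ℝ} (hd : 2 ≤ d) (hs : 3 ≤ s) :
    0 < twoFactor d s ∧
      -(6 / (3 * d * s + d + 1) + 3 / 4 / (d * s) ^ 3) ≤ Real.log (twoFactor d s) := by
  have hds : 3 * d ≤ d * s := by nlinarith
  have hpos : 0 < 3 * d * s + d + 1 := by linarith
  have hw0 : 0 < 3 / (3 * d * s + d + 1) := by positivity
  have hw1 : 3 / (3 * d * s + d + 1) ≤ 1 / 5 := by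
    rw [div_le_iff₀ hpos]
    linarith
  have hw2 : 3 / (3 * d * s + d + 1) ≤ 1 / (d * s) := by
    rw [div_le_div_iff₀ hpos (by linarith)]
    linarith
  have heq : twoFactor d s =
      (1 - 3 / (3 * d * s + d + 1)) / (1 + 3 / (3 * d * s + d + 1)) := by
    have h2 : 3 * d * s + d + 4 ≠ 0 := by linarith
    have h3 : 1 + 3 / (3 * d * s + d + 1) ≠ 0 := by positivity
    rw [twoFactor, div_eq_div_iff h2 h3]
    field_simp
    ring
  rw [heq]
  refine ⟨div_pos (by linarith) (by linarith), ?_⟩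
  refine le_trans ?_ (neg_le_log_ratio hw0.le hw1)
  have hcube := pow_le_pow_left₀ hw0.le hw2 3
  have e1 : (1 / (d * s)) ^ 3 = 1 / (d * s) ^ 3 := by
    rw [div_pow, one_pow]
  have e2 : 3 / 4 / (d * s) ^ 3 = 3 / 4 * (1 / (d * s) ^ 3) := by ring
  have e3 : 6 / (3 * d * s + d + 1) = 2 * (3 / (3 * d * s + d + 1)) := by ring
  rw [e1] at hcube
  rw [e2, e3]
  linarith

/-- The inequality `h < α ^ (1 / d)`, with `α ^ (1 / d)` replaced by its lower bound and
denominators cleared. -/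
lemma prod_factors_inequality {d : ℕ} (hd : 2 ≤ d) {s : ℝ} (hs : 3 ≤ s) {F G : Fin d → ℝ}
    (hFG : ∀ k, (F k = oneFactor d s ∧ G k = 1) ∨ (F k = 1 ∧ G k = oneFactor d s) ∨
      (F k = twoFactor d s ∧ G k = twoFactor d s)) :
    3 - (2 - 1 / (d : ℝ)) * rhoBound d s <
      (3 + (2 - 1 / (d : ℝ)) * rhoBound d s) * ∏ k, F k +
        2 * (1 + 1 / (d : ℝ)) * rhoBound d s * ∏ k, G k := by
  have hd' : (2 : ℝ) ≤ d := by exact_mod_cast hd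
  obtain ⟨ha0, ha⟩ := oneFactor_bounds hd' hs
  obtain ⟨hb0, hb⟩ := twoFactor_bounds hd' hs
  obtain ⟨hρ0, -⟩ := rhoBound_bounds hd' hs
  have hF : ∀ k, 0 < F k := fun k => by
    rcases hFG k with h | h | h <;> rw [h.1] <;> first | assumption | exact one_pos
  have hG : ∀ k, 0 < G k := fun k => by
    rcases hFG k with h | h | h <;> rw [h.2] <;> first | assumption | exact one_pos
  have hinv : 1 / (d : ℝ) ≤ 1 / 2 := one_div_le_one_div_of_le (by norm_num) hd'
  have hinv0 : 0 < 1 / (d : ℝ) := by positivity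
  have hs3 : 1 / s ≤ 1 / 3 := one_div_le_one_div_of_le (by norm_num) hs
  have hs0 : 0 < 1 / s := by positivity
  have hc₁ : 0 < (s - 1) / (s + 1) := div_pos (by linarith) (by linarith)
  have hc₂ : 0 < (2 * s - 1) / (2 * s + 1) := div_pos (by linarith) (by linarith)
  have hL₁ : 2 / s + 2 / (3 * s ^ 3) ≤ -Real.log ((s - 1) / (s + 1)) := by
    have h := le_log_ratio hs0.le (by linarith)
    have e : (1 + 1 / s) / (1 - 1 / s) = (s + 1) / (s - 1) := by
      have : s - 1 ≠ 0 := by linarith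
      field_simp
    rw [e] at h
    rw [← Real.log_inv, inv_div]
    refine le_trans (le_of_eq ?_) h
    field_simp
  have hL₂ : 1 / s + 1 / (12 * s ^ 3) ≤ -Real.log ((2 * s - 1) / (2 * s + 1)) := by
    have h := le_log_ratio (y := 1 / s / 2) (by positivity) (by linarith)
    have e : (1 + 1 / s / 2) / (1 - 1 / s / 2) = (2 * s + 1) / (2 * s - 1) := by
      have : 2 * s - 1 ≠ 0 := by linarith
      field_simp
    rw [e] at h
    rw [← Real.log_inv, inv_div]
    refine le_trans (le_of_eq ?_) h
    field_simp
    ring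
  have hg₁ := mul_one_add_sum_log_le_prod hF hc₁ hL₁
  have hg₂ := mul_one_add_sum_log_le_prod hG hc₂ hL₂
  obtain ⟨p, hp⟩ : ∃ p, p = (3 + (2 - 1 / (d : ℝ)) * rhoBound d s) * ((s - 1) / (s + 1)) :=
    ⟨_, rfl⟩
  obtain ⟨r, hr⟩ : ∃ r, r = 2 * (1 + 1 / (d : ℝ)) * rhoBound d s *
    ((2 * s - 1) / (2 * s + 1)) := ⟨_, rfl⟩
  obtain ⟨E, hE⟩ : ∃ E, E = p * (1 + 2 / s + 2 / (3 * s ^ 3)) +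
    r * (1 + 1 / s + 1 / (12 * s ^ 3)) - 3 + (2 - 1 / (d : ℝ)) * rhoBound d s := ⟨_, rfl⟩
  obtain ⟨hC, hA, hB⟩ := affine_minorant_pos hd' hs hp hr hE
  have hP0 : 0 < 3 + (2 - 1 / (d : ℝ)) * rhoBound d s := by
    have : 0 < (2 - 1 / (d : ℝ)) * rhoBound d s := mul_pos (by linarith) hρ0
    linarith
  have hR0 : 0 < 2 * (1 + 1 / (d : ℝ)) * rhoBound d s := by positivity
  have hp0 : 0 < p := by rw [hp]; positivity
  have hr0 : 0 < r := by rw [hr]; positivity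
  have hsum : 0 < ∑ k, (E / d + p * Real.log (F k) + r * Real.log (G k)) := by
    have : Nonempty (Fin d) := ⟨⟨0, by omega⟩⟩
    refine Finset.sum_pos (fun k _ => ?_) Finset.univ_nonempty
    have hpa := mul_le_mul_of_nonneg_left ha hp0.le
    have hra := mul_le_mul_of_nonneg_left ha hr0.le
    have hpb := mul_le_mul_of_nonneg_left hb (add_pos hp0 hr0).le
    rcases hFG k with h | h | h <;> rw [h.1, h.2] <;> simp [-one_div] <;> linarith
  rw [Finset.sum_add_distrib, Finset.sum_add_distrib, ← Finset.mul_sum, ← Finset.mul_sum,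
    Finset.sum_const, Finset.card_univ, Fintype.card_fin, nsmul_eq_mul,
    mul_div_cancel₀ _ (by linarith : (d : ℝ) ≠ 0)] at hsum
  have h₁ := mul_le_mul_of_nonneg_left hg₁ hP0.le
  have h₂ := mul_le_mul_of_nonneg_left hg₂ hR0.le
  rw [← mul_assoc, ← hp] at h₁
  rw [← mul_assoc, ← hr] at h₂
  linarith

lemma exists_erase_eq_pair {c₁ c₂ : Fin 3} (h : c₁ ≠ c₂) :
    ∃ c₃, c₁ ≠ c₃ ∧ Finset.univ.erase c₂ = {c₁, c₃} ∧ ∀ c, c = c₁ ∨ c = c₂ ∨ c = c₃ := by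
  revert c₁ c₂
  decide

lemma factor_of_single {d s : ℝ} (hd : 2 ≤ d) (hs : 3 ≤ s) :
    1 - ((1 - (d - 2) / (d + 1)) * ((s + 1) / (s - 1) - 1)) /
      ((d - 2) / (d + 1) * 1 + ((s + 1) / (s - 1) + 1)) = oneFactor d s := by
  have hds : 3 * d ≤ d * s := by nlinarith
  have h1 : 0 < d + 1 := by linarith
  have h2 : 0 < s - 1 := by linarith
  have h3 : 0 < 3 * d * s - d + 2 := by linarith
  have e1 : (1 - (d - 2) / (d + 1)) * ((s + 1) / (s - 1) - 1) =
      6 / ((d + 1) * (s - 1)) := by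
    field_simp
    ring
  have e2 : (d - 2) / (d + 1) * 1 + ((s + 1) / (s - 1) + 1) =
      (3 * d * s - d + 2) / ((d + 1) * (s - 1)) := by
    field_simp
    ring
  rw [e1, e2, div_div_div_cancel_right₀ (by positivity), oneFactor, eq_div_iff h3.ne', sub_mul,
    div_mul_cancel₀ _ h3.ne']
  ring

lemma factor_of_double {d s : ℝ} (hd : 2 ≤ d) (hs : 3 ≤ s) :
    1 - ((1 - (d - 2) / (d + 1)) * ((s + 1) / (s - 1) - 1)) /
      ((d - 2) / (d + 1) * 1 + ((s + 1) / (s - 1) + (s + 1) / (s - 1))) = twoFactor d s := by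
  have hds : 3 * d ≤ d * s := by nlinarith
  have h1 : 0 < d + 1 := by linarith
  have h2 : 0 < s - 1 := by linarith
  have h3 : 0 < 3 * d * s + d + 4 := by linarith
  have e1 : (1 - (d - 2) / (d + 1)) * ((s + 1) / (s - 1) - 1) =
      6 / ((d + 1) * (s - 1)) := by
    field_simp
    ring
  have e2 : (d - 2) / (d + 1) * 1 + ((s + 1) / (s - 1) + (s + 1) / (s - 1)) =
      (3 * d * s + d + 4) / ((d + 1) * (s - 1)) := by
    field_simp
    ring
  rw [e1, e2, div_div_div_cancel_right₀ (by positivity), twoFactor, eq_div_iff h3.ne', sub_mul,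
    div_mul_cancel₀ _ h3.ne']
  ring

/-- Clearing denominators in `h < (1 + ρ / d) / (1 - ρ / d)`. -/
lemma one_add_div_lt_ratio {d ρ x y : ℝ} (hd : 2 ≤ d) (hρ : ρ < d) (hx : 0 < x)
    (hy : 0 < y)
    (h : 3 - (2 - 1 / d) * ρ < (3 + (2 - 1 / d) * ρ) * x + 2 * (1 + 1 / d) * ρ * y) :
    1 + (1 - (d - 2) / (d + 1)) * (1 - x) / ((d - 2) / (d + 1) + (x + y)) <
      (1 + ρ / d) / (1 - ρ / d) := by
  have hd0 : 0 < d := by linarith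
  have hd1 : 0 < d + 1 := by linarith
  have hdρ : 0 < d - ρ := by linarith
  have hden : 0 < d - 2 + (d + 1) * (x + y) := by
    have : 0 < (d + 1) * (x + y) := by positivity
    linarith
  have e1 : (1 - (d - 2) / (d + 1)) * (1 - x) = 3 * (1 - x) / (d + 1) := by
    field_simp
    ring
  have e2 : (d - 2) / (d + 1) + (x + y) = (d - 2 + (d + 1) * (x + y)) / (d + 1) := by
    field_simp
  have e3 : (1 + ρ / d) / (1 - ρ / d) = 1 + 2 * ρ / (d - ρ) := by
    have e4 : 1 - ρ / d = (d - ρ) / d := by field_simp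
    rw [e4]
    field_simp
    ring
  rw [e1, e2, div_div_div_cancel_right₀ hd1.ne', e3, add_lt_add_iff_left,
    div_lt_div_iff₀ hden hdρ]
  have h' := mul_lt_mul_of_pos_left h hd0
  have e5 : d * (3 - (2 - 1 / d) * ρ) = 3 * d - (2 * d - 1) * ρ := by field_simp
  have e6 : d * ((3 + (2 - 1 / d) * ρ) * x + 2 * (1 + 1 / d) * ρ * y) =
      (3 * d + (2 * d - 1) * ρ) * x + 2 * (d + 1) * ρ * y := by field_simp
  rw [e5, e6] at h'
  linarith

/-- For `q = 3` and `d ≥ 2`, the pair `(q,d)` satisfies Condition `𝒞(α)` for all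
`α ∈ (1, 53/27]`: with `β_* = max{1 - 3/(d+1), 0}`, for all colours `c₁, c₂` and
all `p⁽¹⁾, …, p⁽ᵈ⁾ ∈ Ex_{c₂}(α)` we have `h_{c₁,c₂,β_*}(p⁽¹⁾,…,p⁽ᵈ⁾) < α^{1/d}`. -/
theorem potts_q3_condition_small_alpha (d : ℕ) (hd : 2 ≤ d)
    (α : ℝ) (hα1 : 1 < α) (hα2 : α ≤ 53 / 27) (c₁ c₂ : Fin 3)
    (p : Fin d → Fin 3 → ℝ) (hp : ∀ k, p k ∈ exSet 3 c₂ α) :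
    hfun 3 d (max (1 - 3 / ((d : ℝ) + 1)) 0) c₁ c₂ p < α ^ (1 / (d : ℝ)) := by
  have hd' : (2 : ℝ) ≤ d := by exact_mod_cast hd
  have hαpow : 1 < α ^ (1 / (d : ℝ)) := Real.one_lt_rpow hα1 (by positivity)
  have hβ : max (1 - 3 / ((d : ℝ) + 1)) 0 = ((d : ℝ) - 2) / (d + 1) := by
    have e : 1 - 3 / ((d : ℝ) + 1) = ((d : ℝ) - 2) / (d + 1) := by
      field_simp
      ring
    rw [e, max_eq_left (div_nonneg (by linarith) (by linarith))]
  rw [hβ]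
  rcases eq_or_ne c₁ c₂ with rfl | hc
  · simpa [hfun, gfun] using hαpow
  obtain ⟨c₃, hc₁₃, herase, hcases⟩ := exists_erase_eq_pair hc
  obtain ⟨s, hs, rfl⟩ : ∃ s : ℝ, 3 ≤ s ∧ α = (s + 1) / (s - 1) := by
    have hα0 : 0 < α - 1 := by linarith
    refine ⟨(α + 1) / (α - 1), by rw [le_div_iff₀ hα0]; linarith, ?_⟩
    have h2 : (α + 1) / (α - 1) - 1 = 2 / (α - 1) := by
      field_simp
      ring
    rw [h2]
    field_simp
    ring
  have hρd : rhoBound d s < d := by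
    have h1 := (rhoBound_bounds hd' hs).2
    have h2 : 1 / s ≤ 1 / 3 := one_div_le_one_div_of_le (by norm_num) hs
    linarith
  refine lt_of_lt_of_le ?_ (ratio_le_rpow hd' hs)
  set F : Fin 3 → Fin d → ℝ := fun c k =>
    1 - ((1 - ((d : ℝ) - 2) / (d + 1)) * (p k c - p k c₂)) /
      (((d : ℝ) - 2) / (d + 1) * p k c₂ + ∑ c ∈ Finset.univ.erase c₂, p k c) with hF
  have hFG : ∀ k, (F c₁ k = oneFactor d s ∧ F c₃ k = 1) ∨
      (F c₁ k = 1 ∧ F c₃ k = oneFactor d s) ∨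
      (F c₁ k = twoFactor d s ∧ F c₃ k = twoFactor d s) := fun k => by
    obtain ⟨hval, hone, c', hc'⟩ := hp k
    simp only [hF, herase, Finset.sum_pair hc₁₃, hone]
    rcases hval c₁ with h₁ | h₁ <;> rcases hval c₃ with h₃ | h₃ <;> rw [h₁, h₃]
    · rcases hcases c' with rfl | rfl | rfl <;> linarith
    · refine Or.inr (Or.inl ⟨by simp, ?_⟩)
      rw [add_comm (1 : ℝ) ((s + 1) / (s - 1))]
      exact factor_of_single hd' hs
    · exact Or.inl ⟨factor_of_single hd' hs, by simp⟩
    · exact Or.inr (Or.inr ⟨factor_of_double hd' hs, factor_of_double hd' hs⟩)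
  have ha := (oneFactor_bounds hd' hs).1
  have hb := (twoFactor_bounds hd' hs).1
  have hpos₁ : 0 < ∏ k, F c₁ k := Finset.prod_pos fun k _ => by
    rcases hFG k with h | h | h <;> rw [h.1] <;> first | assumption | exact one_pos
  have hpos₃ : 0 < ∏ k, F c₃ k := Finset.prod_pos fun k _ => by
    rcases hFG k with h | h | h <;> rw [h.2] <;> first | assumption | exact one_pos
  have hmain := one_add_div_lt_ratio hd' hρd hpos₁ hpos₃ (prod_factors_inequality hd hs hFG)
  rw [hfun, herase, Finset.sum_pair hc₁₃]
  exact hmain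
end

section
/- Let d ≥ 23 be an integer and set β_*(d) = 1 − 3/(d+1). Then there is no pair of real numbers (x,y) satisfying x ≥ (157/80)·y ≥ 0 and 2x + y ≥ 1 ≥ 2y + x which solves the system of equations f_u(d,β_*(d),x,y) = x and f_ℓ(d,β_*(d),x,y) = y. -/
open Filter

section FixedPoint

open Real

/-- A polynomial upper barrier for the solution `X` of
`2 (1 + X) = (2 - X) exp (3 a / 2 + 37 a² / 1000)`. -/
lemma exp_mul_two_sub_le {a : ℝ} (ha : 0 ≤ a) (ha1 : a ≤ 1) :
    exp (3 / 2 * a + 37 / 1000 * a ^ 2) * (2 - (a + 7 / 25 * a ^ 2 - 3 / 25 * a ^ 3)) ≤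
      2 * (1 + (a + 7 / 25 * a ^ 2 - 3 / 25 * a ^ 3)) := by
  have hP : ∀ t ∈ Set.Icc (0 : ℝ) 1, 0 < 1 + (t + 7 / 25 * t ^ 2 - 3 / 25 * t ^ 3) ∧
      0 < 2 - (t + 7 / 25 * t ^ 2 - 3 / 25 * t ^ 3) := by
    rintro t ⟨h0, h1⟩
    have h2 : t ^ 2 ≤ 1 := pow_le_one₀ h0 h1
    have h3 : t ^ 3 ≤ 1 := pow_le_one₀ h0 h1
    have h4 : 0 ≤ t ^ 2 := by positivity
    have h5 : 0 ≤ t ^ 3 := by positivity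
    constructor <;> linarith
  let h : ℝ → ℝ := fun t => log (1 + (t + 7 / 25 * t ^ 2 - 3 / 25 * t ^ 3)) -
    log (2 - (t + 7 / 25 * t ^ 2 - 3 / 25 * t ^ 3)) - (3 / 2 * t + 37 / 1000 * t ^ 2)
  have hderiv : ∀ t ∈ Set.Icc (0 : ℝ) 1, HasDerivAt h
      ((1 + 14 / 25 * t - 9 / 25 * t ^ 2) / (1 + (t + 7 / 25 * t ^ 2 - 3 / 25 * t ^ 3)) +
        (1 + 14 / 25 * t - 9 / 25 * t ^ 2) / (2 - (t + 7 / 25 * t ^ 2 - 3 / 25 * t ^ 3)) -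
        (3 / 2 + 37 / 500 * t)) t := by
    intro t ht
    obtain ⟨p1, p2⟩ := hP t ht
    have hq : HasDerivAt (fun t : ℝ => t + 7 / 25 * t ^ 2 - 3 / 25 * t ^ 3)
        (1 + 14 / 25 * t - 9 / 25 * t ^ 2) t := by
      refine HasDerivAt.congr_deriv
        (((hasDerivAt_id' t).add ((hasDerivAt_pow 2 t).const_mul (7 / 25 : ℝ))).sub
        ((hasDerivAt_pow 3 t).const_mul (3 / 25 : ℝ))) ?_
      norm_num
      ring
    have hw : HasDerivAt (fun t : ℝ => 3 / 2 * t + 37 / 1000 * t ^ 2) (3 / 2 + 37 / 500 * t) t := by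
      refine HasDerivAt.congr_deriv (((hasDerivAt_id' t).const_mul (3 / 2 : ℝ)).add
        ((hasDerivAt_pow 2 t).const_mul (37 / 1000 : ℝ))) ?_
      norm_num
      ring
    refine HasDerivAt.congr_deriv
      ((((hq.const_add 1).log p1.ne').sub ((hq.const_sub 2).log p2.ne')).sub hw) ?_
    ring
  have hmono : MonotoneOn h (Set.Icc 0 1) := by
    refine monotoneOn_of_deriv_nonneg (convex_Icc 0 1)
      (fun t ht => (hderiv t ht).continuousAt.continuousWithinAt)
      (fun t ht => (hderiv t (interior_subset ht)).differentiableAt.differentiableWithinAt) ?_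
    intro t ht
    have ht' := interior_subset ht
    obtain ⟨p1, p2⟩ := hP t ht'
    rw [(hderiv t ht').deriv, div_add_div _ _ p1.ne' p2.ne', sub_nonneg,
      le_div_iff₀ (mul_pos p1 p2)]
    obtain ⟨h0, h1⟩ := ht'
    have key : 0 ≤ t * (1 - t) := mul_nonneg h0 (by linarith)
    nlinarith [key, mul_nonneg h0 key, mul_nonneg h0 (mul_nonneg h0 key), pow_nonneg h0 3,
      pow_nonneg h0 4, pow_nonneg h0 5, pow_nonneg h0 6, mul_nonneg (pow_nonneg h0 3) key,
      mul_nonneg (pow_nonneg h0 4) key, mul_nonneg (pow_nonneg h0 5) key]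
  have hle := hmono (Set.left_mem_Icc.2 zero_le_one) ⟨ha, ha1⟩ ha
  obtain ⟨p1, p2⟩ := hP a ⟨ha, ha1⟩
  have h0 : h 0 = -log 2 := by simp [h]
  rw [h0] at hle
  have hlog : 3 / 2 * a + 37 / 1000 * a ^ 2 ≤
      log (2 * (1 + (a + 7 / 25 * a ^ 2 - 3 / 25 * a ^ 3)) /
        (2 - (a + 7 / 25 * a ^ 2 - 3 / 25 * a ^ 3))) := by
    rw [log_div (by positivity) p2.ne', log_mul two_ne_zero p1.ne']
    simp only [h] at hle
    linarith
  rwa [le_log_iff_exp_le (by positivity), le_div_iff₀ p2] at hlog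

/-- The scalar inequality that excludes fixed points away from the symmetric one. -/
lemma one_sub_mul_exp_add_exp_lt {a : ℝ} (ha : 79 / 250 ≤ a) (ha1 : a ≤ 1) :
    (1 - a) * (exp (2 * a + 313 / 1000 * a ^ 2 - 3 / 25 * a ^ 3) +
      exp (a + 593 / 1000 * a ^ 2 - 6 / 25 * a ^ 3)) < 2 + a := by
  let r : ℝ → ℝ := fun t => 2 + t - (1 - t) * (exp (2 * t + 313 / 1000 * t ^ 2 - 3 / 25 * t ^ 3) +
      exp (t + 593 / 1000 * t ^ 2 - 6 / 25 * t ^ 3))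
  have hderiv : ∀ t : ℝ, HasDerivAt r
      (1 + exp (2 * t + 313 / 1000 * t ^ 2 - 3 / 25 * t ^ 3) *
          (1 - (1 - t) * (2 + 313 / 500 * t - 9 / 25 * t ^ 2)) +
        exp (t + 593 / 1000 * t ^ 2 - 6 / 25 * t ^ 3) *
          (1 - (1 - t) * (1 + 593 / 500 * t - 18 / 25 * t ^ 2))) t := by
    intro t
    have hA : HasDerivAt (fun t : ℝ => 2 * t + 313 / 1000 * t ^ 2 - 3 / 25 * t ^ 3)
        (2 + 313 / 500 * t - 9 / 25 * t ^ 2) t := by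
      refine HasDerivAt.congr_deriv ((((hasDerivAt_id' t).const_mul (2 : ℝ)).add
        ((hasDerivAt_pow 2 t).const_mul (313 / 1000 : ℝ))).sub
        ((hasDerivAt_pow 3 t).const_mul (3 / 25 : ℝ))) ?_
      norm_num
      ring
    have hB : HasDerivAt (fun t : ℝ => t + 593 / 1000 * t ^ 2 - 6 / 25 * t ^ 3)
        (1 + 593 / 500 * t - 18 / 25 * t ^ 2) t := by
      refine HasDerivAt.congr_deriv (((hasDerivAt_id' t).add
        ((hasDerivAt_pow 2 t).const_mul (593 / 1000 : ℝ))).sub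
        ((hasDerivAt_pow 3 t).const_mul (6 / 25 : ℝ))) ?_
      norm_num
      ring
    refine HasDerivAt.congr_deriv (((hasDerivAt_id' t).const_add 2).sub
      (((hasDerivAt_id' t).const_sub 1).mul (hA.exp.add hB.exp))) ?_
    ring
  have hmono : MonotoneOn r (Set.Icc (79 / 250) 1) := by
    refine monotoneOn_of_deriv_nonneg (convex_Icc _ _)
      (fun t _ => (hderiv t).continuousAt.continuousWithinAt)
      (fun t _ => (hderiv t).differentiableAt.differentiableWithinAt) ?_
    intro t ht
    rw [(hderiv t).deriv]
    obtain ⟨h0, h1⟩ := interior_subset ht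
    have hB : 0 ≤ 1 - (1 - t) * (1 + 593 / 500 * t - 18 / 25 * t ^ 2) := by
      nlinarith [mul_nonneg (sub_nonneg.2 h0) (sub_nonneg.2 h1)]
    have htangent : (51 / 100 : ℝ) * (5 / 3 - (2 * t + 313 / 1000 * t ^ 2 - 3 / 25 * t ^ 3)) ≥
        (1 - t) * (2 + 313 / 500 * t - 9 / 25 * t ^ 2) - 1 := by
      nlinarith [mul_nonneg (sub_nonneg.2 h0) (sub_nonneg.2 h1)]
    set A := 2 * t + 313 / 1000 * t ^ 2 - 3 / 25 * t ^ 3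
    have hc : (51 / 100 : ℝ) ≤ exp (-(2 / 3)) := by
      have h : exp (2 / 3) ≤ (100 / 51 : ℝ) := by
        refine (exp_bound' (n := 6) (by norm_num) (by norm_num) (by norm_num)).trans ?_
        norm_num [Finset.sum_range_succ, Nat.factorial]
      rw [exp_neg, ← inv_div]
      exact inv_anti₀ (exp_pos _) h
    have hE : (1 - t) * (2 + 313 / 500 * t - 9 / 25 * t ^ 2) - 1 ≤ exp (-A) := by
      have h2 : exp (-A) = exp (-(2 / 3)) * exp (2 / 3 - A) := by rw [← exp_add]; ring_nf
      have h3 := add_one_le_exp (2 / 3 - A)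
      rcases le_total 0 (5 / 3 - A) with h4 | h4
      · rw [h2]
        refine htangent.le.trans (mul_le_mul hc (by linarith) h4 (exp_pos _).le)
      · linarith [exp_pos (-A)]
    have h5 : exp A * exp (-A) = 1 := by rw [← exp_add]; simp
    nlinarith [mul_le_mul_of_nonneg_left hE (exp_pos A).le,
      mul_nonneg (exp_pos (t + 593 / 1000 * t ^ 2 - 6 / 25 * t ^ 3)).le hB]
  have hle := hmono (Set.left_mem_Icc.2 (by norm_num)) ⟨ha, ha1⟩ ha
  have hpos : 0 < r (79 / 250) := by
    have e1 : exp (2 * (79 / 250) + 313 / 1000 * (79 / 250) ^ 2 - 3 / 25 * (79 / 250) ^ 3) ≤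
        (1934 / 1000 : ℝ) := by
      refine (exp_bound' (n := 7) (by norm_num) (by norm_num) (by norm_num)).trans ?_
      norm_num [Finset.sum_range_succ, Nat.factorial]
    have e2 : exp (79 / 250 + 593 / 1000 * (79 / 250) ^ 2 - 6 / 25 * (79 / 250) ^ 3) ≤
        (1445 / 1000 : ℝ) := by
      refine (exp_bound' (n := 7) (by norm_num) (by norm_num) (by norm_num)).trans ?_
      norm_num [Finset.sum_range_succ, Nat.factorial]
    simp only [r]
    linarith
  have := hpos.trans_le hle
  simp only [r] at this
  linarith

lemma one_add_le_one_sub_two_mul_exp {v : ℝ} (hv : 0 ≤ v) (hv1 : v ≤ 1 / 23) :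
    1 + v ≤ (1 - 2 * v) * exp (3 * v + 17 / 10 * v ^ 2) := by
  have ht := sum_le_exp_of_nonneg (x := 3 * v + 17 / 10 * v ^ 2) (by positivity) 4
  norm_num [Finset.sum_range_succ, Nat.factorial] at ht
  refine le_trans ?_ (mul_le_mul_of_nonneg_left ht (by linarith))
  nlinarith [pow_nonneg hv 2, pow_nonneg hv 3, mul_nonneg (pow_nonneg hv 2) (sub_nonneg.2 hv1),
    mul_nonneg (pow_nonneg hv 3) (sub_nonneg.2 hv1),
    mul_nonneg (pow_nonneg hv 4) (sub_nonneg.2 hv1),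
    mul_nonneg (pow_nonneg hv 5) (sub_nonneg.2 hv1),
    mul_nonneg (pow_nonneg hv 6) (sub_nonneg.2 hv1)]

lemma one_le_one_sub_mul_exp {u : ℝ} (hu : 0 ≤ u) (hu1 : u ≤ 2 / 23) :
    1 ≤ (1 - u) * exp (u + 11 / 20 * u ^ 2) := by
  have ht := quadratic_le_exp_of_nonneg (x := u + 11 / 20 * u ^ 2) (by positivity)
  refine le_trans ?_ (mul_le_mul_of_nonneg_left ht (by linarith))
  nlinarith [mul_nonneg (pow_nonneg hu 2) (sub_nonneg.2 hu1),
    mul_nonneg (pow_nonneg hu 3) (sub_nonneg.2 hu1),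
    mul_nonneg (pow_nonneg hu 4) (sub_nonneg.2 hu1), pow_nonneg hu 2]

lemma pow_le_pow_mul_exp {p q t : ℝ} (d : ℕ) (hp : 0 ≤ p) (h : p ≤ q * exp t) :
    p ^ d ≤ q ^ d * exp (d * t) := by
  rw [exp_nat_mul, ← mul_pow]
  exact pow_le_pow_left₀ hp h d

/-- The first fixed point equation, in the coordinates `x = (1 + X) / 3`, `y = (1 - a) / 3`,
bounds `X` by an explicit polynomial in `a`. -/
lemma le_barrier_of_eq {d : ℕ} (hd : 23 ≤ d) {X a N M : ℝ} (ha : 0 ≤ a) (ha1 : a ≤ 1)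
    (hX0 : 0 ≤ X) (hX : X ≤ 2 * a) (hN : N = ((d : ℝ) + a) ^ d) (hM : 0 ≤ M)
    (hM2 : M ^ 2 = (((d : ℝ) - X) * (d - (a - X))) ^ d)
    (heq : 2 * (1 + X) * M = (2 - X) * N) :
    X ≤ a + 7 / 25 * a ^ 2 - 3 / 25 * a ^ 3 := by
  have hD : (23 : ℝ) ≤ d := by exact_mod_cast hd
  have hD0 : (0 : ℝ) < d := by linarith
  set D : ℝ := (d : ℝ) with hDdef
  set w := 3 / 2 * a + 37 / 1000 * a ^ 2 with hw
  have hv := one_add_le_one_sub_two_mul_exp (v := a / D) (by positivity)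
    (by rw [div_le_div_iff₀ hD0 (by norm_num)]; linarith)
  have hbase : D + a ≤ (D - 2 * a) * exp (3 * (a / D) + 17 / 10 * (a / D) ^ 2) := by
    have h := mul_le_mul_of_nonneg_left hv hD0.le
    have h1 : D * (1 + a / D) = D + a := by field_simp
    have h2 : D * (1 - 2 * (a / D)) = D - 2 * a := by field_simp
    rwa [← mul_assoc, h1, h2] at h
  have hquad : (D + a) * (D - 2 * a) ≤ (D - X) * (D - (a - X)) := by
    nlinarith [mul_nonneg (sub_nonneg.2 hX) (add_nonneg hX0 ha)]
  have hsq : (D + a) ^ 2 ≤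
      (D - X) * (D - (a - X)) * exp (3 * (a / D) + 17 / 10 * (a / D) ^ 2) :=
    calc (D + a) ^ 2 = (D + a) * (D + a) := sq _
      _ ≤ (D + a) * ((D - 2 * a) * exp (3 * (a / D) + 17 / 10 * (a / D) ^ 2)) :=
        mul_le_mul_of_nonneg_left hbase (by linarith)
      _ ≤ _ := by
        rw [← mul_assoc]
        exact mul_le_mul_of_nonneg_right hquad (exp_pos _).le
  have hpow := pow_le_pow_mul_exp d (sq_nonneg _) hsq
  have hexp : exp (d * (3 * (a / D) + 17 / 10 * (a / D) ^ 2)) ≤ exp w ^ 2 := by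
    rw [← exp_nat_mul, exp_le_exp]
    have h1 : (d : ℝ) * (3 * (a / D) + 17 / 10 * (a / D) ^ 2) =
        3 * a + 17 / 10 * a ^ 2 / D := by rw [← hDdef]; field_simp
    have h2 : 17 / 10 * a ^ 2 / D ≤ 37 / 500 * a ^ 2 := by
      rw [div_le_iff₀ hD0]
      nlinarith [mul_nonneg (sq_nonneg a) (sub_nonneg.2 hD), sq_nonneg a]
    rw [h1, hw]
    push_cast
    linarith
  have hNM : N ≤ M * exp w := by
    refine le_of_sq_le_sq ?_ (mul_nonneg hM (exp_pos _).le)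
    rw [mul_pow, hM2, hN, ← pow_mul, mul_comm d 2, pow_mul]
    refine hpow.trans (mul_le_mul_of_nonneg_left hexp ?_)
    rw [← hM2]
    positivity
  have hNpos : 0 < N := by rw [hN]; positivity
  have hMpos : 0 < M := pos_of_mul_pos_left (hNpos.trans_le hNM) (exp_pos _).le
  have hX2 : X ≤ 2 := by linarith
  have hle : 2 * (1 + X) ≤ (2 - X) * exp w := by
    have h := mul_le_mul_of_nonneg_left hNM (sub_nonneg.2 hX2)
    rw [← heq] at h
    exact le_of_mul_le_mul_right (by linarith) hMpos
  by_contra! hlt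
  have hbar := exp_mul_two_sub_le ha ha1
  rw [← hw] at hbar
  nlinarith [mul_pos (sub_pos.2 hlt) (exp_pos w)]

/-- The second fixed point equation, in the coordinates `x = (1 + X) / 3`, `y = (1 - a) / 3`,
has no solution below the barrier when `a` is bounded away from `0`. -/
lemma second_equation_ne {d : ℕ} (hd : 23 ≤ d) {X a : ℝ} (ha : 79 / 250 ≤ a) (ha1 : a ≤ 1)
    (hX0 : 0 ≤ X) (hX : X ≤ a + 7 / 25 * a ^ 2 - 3 / 25 * a ^ 3) (hXa : X ≤ 2 * a) :
    (1 - a) * (((d : ℝ) + a) ^ d + (d - (a - X)) ^ d) ≠ (2 + a) * ((d : ℝ) - X) ^ d := by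
  have hD : (23 : ℝ) ≤ d := by exact_mod_cast hd
  have hD0 : (0 : ℝ) < d := by linarith
  have hDX : 0 < (d : ℝ) - X := by linarith
  have hu := one_le_one_sub_mul_exp (u := X / d) (by positivity)
    (by rw [div_le_div_iff₀ hD0 (by norm_num)]; linarith)
  have hXq : X ≤ 29 / 25 * a := by
    nlinarith [mul_nonneg (by linarith : 0 ≤ a) (sub_nonneg.2 ha1),
      mul_nonneg (mul_nonneg (by linarith : 0 ≤ a) (by linarith : 0 ≤ a)) (sub_nonneg.2 ha1)]
  have hratio : ∀ t : ℝ, 0 ≤ (d : ℝ) + t → ((d : ℝ) + t) ^ d ≤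
      ((d : ℝ) - X) ^ d * exp (t + X + 33 / 1000 * a ^ 2) := by
    intro t ht
    have h1 : (d : ℝ) + t ≤ ((d : ℝ) - X) * exp (t / d + (X / d + 11 / 20 * (X / d) ^ 2)) := by
      rw [exp_add]
      have h2 := add_one_le_exp (t / d)
      have h3 : (d : ℝ) + t = d * (t / d + 1) := by field_simp; ring
      have h4 : (d : ℝ) - X = d * (1 - X / d) := by field_simp
      calc (d : ℝ) + t = d * (t / d + 1) := h3
        _ ≤ d * exp (t / d) := by gcongr
        _ ≤ d * exp (t / d) * ((1 - X / d) * exp (X / d + 11 / 20 * (X / d) ^ 2)) :=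
          le_mul_of_one_le_right (by positivity) hu
        _ = _ := by rw [h4]; ring
    refine (pow_le_pow_mul_exp d ht h1).trans
      (mul_le_mul_of_nonneg_left (exp_le_exp.2 ?_) (pow_pos hDX d).le)
    have h2 : (d : ℝ) * (t / d + (X / d + 11 / 20 * (X / d) ^ 2)) =
        t + X + 11 / 20 * X ^ 2 / d := by
      field_simp
      ring
    have h3 : 11 / 20 * X ^ 2 / d ≤ 33 / 1000 * a ^ 2 := by
      rw [div_le_iff₀ hD0]
      have h4 : X ^ 2 ≤ (29 / 25 * a) ^ 2 := pow_le_pow_left₀ hX0 hXq 2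
      nlinarith [mul_nonneg (sq_nonneg a) (sub_nonneg.2 hD), sq_nonneg a]
    linarith
  have hB := hratio a (by linarith)
  have hC := hratio (X - a) (by linarith)
  have hA' : exp (a + X + 33 / 1000 * a ^ 2) ≤
      exp (2 * a + 313 / 1000 * a ^ 2 - 3 / 25 * a ^ 3) := exp_le_exp.2 (by linarith)
  have hB' : exp (X - a + X + 33 / 1000 * a ^ 2) ≤
      exp (a + 593 / 1000 * a ^ 2 - 6 / 25 * a ^ 3) := exp_le_exp.2 (by linarith)
  have hpow := pow_pos hDX d
  refine ne_of_lt ?_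
  calc (1 - a) * (((d : ℝ) + a) ^ d + (d - (a - X)) ^ d)
      = (1 - a) * (((d : ℝ) + a) ^ d + (d + (X - a)) ^ d) := by ring_nf
    _ ≤ (1 - a) * (((d : ℝ) - X) ^ d * exp (2 * a + 313 / 1000 * a ^ 2 - 3 / 25 * a ^ 3) +
        ((d : ℝ) - X) ^ d * exp (a + 593 / 1000 * a ^ 2 - 6 / 25 * a ^ 3)) :=
      mul_le_mul_of_nonneg_left (add_le_add
        (hB.trans (mul_le_mul_of_nonneg_left hA' hpow.le))
        (hC.trans (mul_le_mul_of_nonneg_left hB' hpow.le))) (by linarith)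
    _ = (1 - a) * (exp (2 * a + 313 / 1000 * a ^ 2 - 3 / 25 * a ^ 3) +
        exp (a + 593 / 1000 * a ^ 2 - 6 / 25 * a ^ 3)) * ((d : ℝ) - X) ^ d := by ring
    _ < (2 + a) * ((d : ℝ) - X) ^ d :=
      mul_lt_mul_of_pos_right (one_sub_mul_exp_add_exp_lt ha ha1) hpow

end FixedPoint

/-- For every integer `d ≥ 23`, with `β_*(d) = 1 - 3/(d+1)`, there is no real
solution `(x,y)` of the system `f_u(d,β_*(d),x,y) = x`, `f_ℓ(d,β_*(d),x,y) = y`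
satisfying `x ≥ (157/80)·y ≥ 0` and `2x + y ≥ 1 ≥ 2y + x`. -/
theorem no_fixed_point_large_d (d : ℕ) (hd : 23 ≤ d) :
    ¬ ∃ x y : ℝ,
        (157 / 80) * y ≤ x ∧ 0 ≤ y ∧ 1 ≤ 2 * x + y ∧ 2 * y + x ≤ 1 ∧
        fU d (1 - 3 / ((d : ℝ) + 1)) x y = x ∧
        fL d (1 - 3 / ((d : ℝ) + 1)) x y = y := by
  rintro ⟨x, y, hratio, hy, hxz, hyz, hU, hL⟩
  have hD : (23 : ℝ) ≤ d := by exact_mod_cast hd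
  have hD1 : (0 : ℝ) < d + 1 := by linarith
  obtain ⟨X, rfl⟩ : ∃ X, x = (1 + X) / 3 := ⟨3 * x - 1, by ring⟩
  obtain ⟨a, rfl⟩ : ∃ a, y = (1 - a) / 3 := ⟨1 - 3 * y, by ring⟩
  have ha : 0 ≤ a := by linarith
  have ha1 : a ≤ 1 := by linarith
  have hX0 : 0 ≤ X := by linarith
  have hX : X ≤ 2 * a := by linarith
  have hA : 1 - (1 - (1 - 3 / ((d : ℝ) + 1))) * ((1 + X) / 3) = (d - X) / (d + 1) := by
    field_simp; ring
  have hB : 1 - (1 - (1 - 3 / ((d : ℝ) + 1))) * ((1 - a) / 3) = (d + a) / (d + 1) := by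
    field_simp; ring
  have hC : 1 - (1 - (1 - 3 / ((d : ℝ) + 1))) * (1 - (1 + X) / 3 - (1 - a) / 3) =
      (d - (a - X)) / (d + 1) := by
    field_simp; ring
  have pA : 0 < (d : ℝ) - X := by linarith
  have pB : 0 < (d : ℝ) + a := by linarith
  have pC : 0 < (d : ℝ) - (a - X) := by linarith
  rw [fU, hA, hB, hC, Real.div_rpow pA.le hD1.le, Real.div_rpow pC.le hD1.le, div_pow] at hU
  rw [fL, hA, hB, hC, div_pow, div_pow, div_pow] at hL
  have hhalf : ∀ p : ℝ, 0 ≤ p → (p ^ ((d : ℝ) / 2)) ^ 2 = p ^ d := by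
    intro p hp
    rw [← Real.rpow_natCast, ← Real.rpow_mul hp, ← Real.rpow_natCast]
    congr 1
    push_cast
    ring
  have hXbar : X ≤ a + 7 / 25 * a ^ 2 - 3 / 25 * a ^ 3 := by
    refine le_barrier_of_eq hd (M := ((d : ℝ) - X) ^ ((d : ℝ) / 2) *
      ((d : ℝ) - (a - X)) ^ ((d : ℝ) / 2)) ha ha1 hX0 hX rfl (by positivity) ?_ ?_
    · rw [mul_pow, hhalf _ pA.le, hhalf _ pC.le, mul_pow]
    · have hq := hhalf _ hD1.le
      have hqpos : 0 < ((d : ℝ) + 1) ^ ((d : ℝ) / 2) := Real.rpow_pos_of_pos hD1 _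
      rw [← hq] at hU
      have hNpos : 0 < ((d : ℝ) + a) ^ d := pow_pos pB d
      have hApos : 0 < ((d : ℝ) - X) ^ ((d : ℝ) / 2) := Real.rpow_pos_of_pos pA _
      have hCpos : 0 < ((d : ℝ) - (a - X)) ^ ((d : ℝ) / 2) := Real.rpow_pos_of_pos pC _
      generalize ((d : ℝ) + 1) ^ ((d : ℝ) / 2) = q at hU hqpos
      generalize ((d : ℝ) + a) ^ d = N at hU hNpos ⊢
      generalize ((d : ℝ) - X) ^ ((d : ℝ) / 2) = P at hU hApos ⊢
      generalize ((d : ℝ) - (a - X)) ^ ((d : ℝ) / 2) = Q at hU hCpos ⊢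
      rw [div_eq_iff (by positivity)] at hU
      field_simp at hU
      linarith
  have ha0 : 79 / 250 ≤ a := by
    by_contra! hlt
    nlinarith [mul_nonneg ha ha, mul_nonneg ha (sub_nonneg.2 hlt.le), pow_nonneg ha 3]
  refine second_equation_ne hd ha0 ha1 hX0 hXbar hX ?_
  have hAp := pow_pos pA d
  have hBp := pow_pos pB d
  have hCp := pow_pos pC d
  have hqp := pow_pos hD1 d
  rw [div_eq_iff (by positivity)] at hL
  field_simp at hL
  linarith
end
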